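/- Let q ∈ (0,1] and let n ≥ ⌊|4q−2|/q⌋ + 1. Then for every initial label configuration ρ : ℤ² → {H,V}, the n-walker H–V walk with parameter q and initial configuration ρ is recurrent with probability 1, i.e. p_rec(ρ) = 1. -/

import Mathlib

/-!
Write `α = |4q - 2| / q`, so that `n > α`. The proof shows that almost surely walkers return to a
fixed neighbourhood of the origin infinitely often, and that such returns propagate to all of `ℤ²`.

*Returns.* The potential `pot p = log (|p|² - 1)` is superharmonic for simple random walk at the sites
with `|p|² ≥ 9`. A walker of the `H`-`V` walk is not a simple random walk: its next step is biased
towards one axis by the current label, by an amount governed by `hvDiff`, the imbalance between the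
horizontal and vertical second differences of `pot`. The step also relaxes that label, so the sum of
`pot` over the walkers, corrected by `(1 - 2q)/(2q)` times `∑ₓ hvDiff x · (sgn (label at x) - sgn (ρ x))`,
is a supermartingale (`lintegral_killed_succ`) as long as no walker is near the origin. At most `T`
labels have changed by time `T`, and the sum of `|hvDiff|` over `T` sites is at most `2 log T + O(1)`
(`sum_abs_hvDiff_le`), so the correction is at most `α (log T + O(1))` in absolute value. On the event
`Esc u` that no walker comes near the origin after time `u`, typical positions at times of order `T`
are at distance of order `√T` (`sum_box_le`), so the sum of the potentials is about `n log T`. If `P`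
is the probability of `Esc u` and `G` that of the same event up to a time `v`, comparing expectations
gives `n P ≤ α G` (`mul_esc_le`); the limit `v → ∞` gives `n P ≤ α P`, hence `P = 0`.

*Propagation.* If some walker leaves `x` infinitely often, it moves to each of the four neighbours of
`x` infinitely often (`ae_frequently_hit`). When `q = 1`, every second departure
from `x` has probability zero of leading to a given neighbour; the supermartingale used here therefore
depends on the label at `x`, and it gains a factor `1/(1 - q/4)` at each departure that avoids the
neighbour. Therefore the set of sites visited
infinitely often is closed under moves to neighbours, and it is not empty by the first part.
-/

open MeasureTheory Filter
open scoped ENNReal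

namespace HV

abbrev Z2 := ℤ × ℤ

/-- A label configuration: `true` stands for label `H`, `false` for label `V`. -/
abbrev Config := Z2 → Bool

/-- The state of the walk: positions of the `n` walkers and the label configuration. -/
abbrev State (n : ℕ) := (Fin n → Z2) × Config

/-- A trajectory: the sequence of positions of the active walker after each step. -/
abbrev Path := ℕ → Z2

/-- The walker that is active at the `(t+1)`-st step of the cyclic turn order. -/
def active (n : ℕ) (hn : 0 < n) (t : ℕ) : Fin n := ⟨t % n, Nat.mod_lt t hn⟩

/-- Update the state when walker `i` moves to `y`: the label of the vertex the walker
leaves becomes `H` (`true`) if the move was horizontal, `V` (`false`) if vertical. -/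
def apply' (n : ℕ) (s : State n) (i : Fin n) (y : Z2) : State n :=
  (Function.update s.1 i y,
    Function.update s.2 (s.1 i) (if y.2 = (s.1 i).2 then true else false))

/-- The one-step transition probability of the `H`–`V` walk with parameter `q`:
probability that, from state `s`, the active walker `i` moves to `y`.  The label of the
current location is first resampled (flipped with probability `q`), and then the walker
takes a uniform horizontal step if the new label is `H`, a uniform vertical step if the
new label is `V`. -/
noncomputable def weight (q : ℝ) (n : ℕ) (s : State n) (i : Fin n) (y : Z2) : ℝ≥0∞ :=
  if y = s.1 i + (1, 0) ∨ y = s.1 i - (1, 0) then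
    ENNReal.ofReal ((if s.2 (s.1 i) then 1 - q else q) / 2)
  else if y = s.1 i + (0, 1) ∨ y = s.1 i - (0, 1) then
    ENNReal.ofReal ((if s.2 (s.1 i) then q else 1 - q) / 2)
  else 0

/-- The deterministic reconstruction of the state of the `n`-walker `H`–`V` walk
(with all walkers starting at the origin and initial labels `ρ`) from a trajectory. -/
def seq (n : ℕ) (hn : 0 < n) (ρ : Config) (y : Path) : ℕ → State n
  | 0 => (fun _ => (0, 0), ρ)
  | t + 1 => apply' n (seq n hn ρ y t) (active n hn t) (y t)

/-- `μ` is the law of the `n`-walker `H`–`V` walk with parameter `q` and initial labels `ρ`: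
the finite-dimensional distributions are products of one-step transition probabilities. -/
def IsLaw (q : ℝ) (n : ℕ) (hn : 0 < n) (ρ : Config) (μ : Measure Path) : Prop :=
  ∀ (t : ℕ) (c : Path),
    μ {y : Path | ∀ s < t, y s = c s} =
      ∏ s ∈ Finset.range t, weight q n (seq n hn ρ c s) (active n hn s) (c s)

/-- A trajectory is recurrent if every vertex is visited infinitely many times. -/
def Recurrent (n : ℕ) (hn : 0 < n) (ρ : Config) (y : Path) : Prop :=
  ∀ v : Z2, {t : ℕ | ∃ i, (seq n hn ρ y t).1 i = v}.Infinite

end HV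

/-! ### The logarithmic potential -/

namespace HV

/-- The squared Euclidean norm. -/
noncomputable def nsq (p : Z2) : ℝ := (p.1 : ℝ) ^ 2 + (p.2 : ℝ) ^ 2

/-- The potential `log (|p|² - 1)`; the conventions `log 0 = log (-1) = 0` make it nonnegative. -/
noncomputable def pot (p : Z2) : ℝ := Real.log (nsq p - 1)

/-- A quarter of the difference between the horizontal and vertical second differences of `pot`,
set to `0` near the origin. -/
noncomputable def hvDiff (p : Z2) : ℝ :=
  if 9 ≤ nsq p then
    (pot (p + (1, 0)) + pot (p - (1, 0)) - pot (p + (0, 1)) - pot (p - (0, 1))) / 4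
  else 0

lemma nsq_nonneg (p : Z2) : 0 ≤ nsq p := by unfold nsq; positivity

lemma pot_nonneg (p : Z2) : 0 ≤ pot p := by
  have e : nsq p - 1 = ((p.1 ^ 2 + p.2 ^ 2 - 1 : ℤ) : ℝ) := by unfold nsq; push_cast; ring
  have h0 : (0 : ℤ) ≤ p.1 ^ 2 + p.2 ^ 2 := by positivity
  unfold pot
  rw [e]
  exact Real.log_intCast_nonneg _

lemma pot_le (p : Z2) : pot p ≤ nsq p := by
  unfold pot
  rcases le_or_gt 1 (nsq p) with h | h
  · rcases h.eq_or_lt with h | h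
    · rw [← h]; simp
    · have := Real.log_le_sub_one_of_pos (sub_pos.2 h); linarith
  · have h1 := nsq_nonneg p
    rw [← Real.log_neg_eq_log]
    have := Real.log_le_sub_one_of_pos (x := -(nsq p - 1)) (by linarith)
    linarith

/-- Values of `pot` at the four neighbours. -/
lemma pot_nbr (x y : ℤ) :
    pot ((x, y) + (1, 0)) = Real.log (nsq (x, y) + 2 * x) ∧
    pot ((x, y) - (1, 0)) = Real.log (nsq (x, y) - 2 * x) ∧
    pot ((x, y) + (0, 1)) = Real.log (nsq (x, y) + 2 * y) ∧
    pot ((x, y) - (0, 1)) = Real.log (nsq (x, y) - 2 * y) := by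
  unfold pot nsq
  refine ⟨?_, ?_, ?_, ?_⟩ <;> congr 1 <;> simp <;> ring

lemma pos_of_far {s x : ℝ} (hs : 9 ≤ s) (hx : x ^ 2 ≤ s) : 0 < s + 2 * x ∧ 0 < s - 2 * x := by
  have : |2 * x| < s := by
    apply abs_lt_of_sq_lt_sq _ (by linarith)
    nlinarith
  rw [abs_lt] at this
  constructor <;> linarith [this.1, this.2]

/-- Away from the origin `pot` is superharmonic.  With `s = |p|²`, the product of `|·|² - 1` over
the four neighbours is `(s² - 4x²)(s² - 4y²) = s⁴ - 4s³ + 16x²y²`, which is at most `(s - 1)⁴`. -/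
lemma pot_superharmonic (p : Z2) (hp : 9 ≤ nsq p) :
    pot (p + (1, 0)) + pot (p - (1, 0)) + pot (p + (0, 1)) + pot (p - (0, 1)) ≤ 4 * pot p := by
  obtain ⟨x, y⟩ := p
  obtain ⟨h1, h2, h3, h4⟩ := pot_nbr x y
  rw [h1, h2, h3, h4]
  unfold pot
  have hs : nsq (x, y) = (x : ℝ) ^ 2 + (y : ℝ) ^ 2 := rfl
  have hx : (x : ℝ) ^ 2 ≤ nsq (x, y) := by rw [hs]; nlinarith [sq_nonneg (y : ℝ)]
  have hy : (y : ℝ) ^ 2 ≤ nsq (x, y) := by rw [hs]; nlinarith [sq_nonneg (x : ℝ)]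
  obtain ⟨a1, a2⟩ := pos_of_far hp hx
  obtain ⟨a3, a4⟩ := pos_of_far hp hy
  generalize nsq (x, y) = s at *
  rw [← Real.log_mul a1.ne' a2.ne', ← Real.log_mul (by positivity) a3.ne',
    ← Real.log_mul (by positivity) a4.ne']
  have : 4 * Real.log (s - 1) = Real.log ((s - 1) ^ 4) := by simp
  rw [this]
  apply Real.log_le_log (by positivity)
  have hxy : 4 * ((x : ℝ) ^ 2 * (y : ℝ) ^ 2) ≤ s ^ 2 := by
    rw [hs]; nlinarith [sq_nonneg ((x : ℝ) ^ 2 - (y : ℝ) ^ 2)]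
  have : (s + 2 * x) * (s - 2 * x) * (s + 2 * y) * (s - 2 * y)
      = s ^ 4 - 4 * s ^ 2 * (x ^ 2 + y ^ 2) + 16 * ((x : ℝ) ^ 2 * (y : ℝ) ^ 2) := by ring
  rw [this, ← hs]
  nlinarith

lemma log_sub_le {A B : ℝ} (hA : 0 < A) (hB : 0 < B) : Real.log A - Real.log B ≤ (A - B) / B := by
  rw [← Real.log_div hA.ne' hB.ne', sub_div, div_self hB.ne']
  exact Real.log_le_sub_one_of_pos (by positivity)

lemma abs_hvDiff_le (x y : ℤ) (hp : 9 ≤ nsq (x, y)) :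
    |hvDiff (x, y)| ≤ |(x : ℝ) ^ 2 - (y : ℝ) ^ 2| / (nsq (x, y) ^ 2 - 4 * nsq (x, y)) := by
  unfold hvDiff
  rw [if_pos hp]
  obtain ⟨h1, h2, h3, h4⟩ := pot_nbr x y
  rw [h1, h2, h3, h4]
  have hs : nsq (x, y) = (x : ℝ) ^ 2 + (y : ℝ) ^ 2 := rfl
  have hx : (x : ℝ) ^ 2 ≤ nsq (x, y) := by rw [hs]; nlinarith [sq_nonneg (y : ℝ)]
  have hy : (y : ℝ) ^ 2 ≤ nsq (x, y) := by rw [hs]; nlinarith [sq_nonneg (x : ℝ)]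
  obtain ⟨a1, a2⟩ := pos_of_far hp hx
  obtain ⟨a3, a4⟩ := pos_of_far hp hy
  generalize nsq (x, y) = s at *
  have e1 : Real.log (s + 2 * x) + Real.log (s - 2 * x) = Real.log (s ^ 2 - 4 * x ^ 2) := by
    rw [← Real.log_mul a1.ne' a2.ne']; congr 1; ring
  have e2 : Real.log (s + 2 * y) + Real.log (s - 2 * y) = Real.log (s ^ 2 - 4 * y ^ 2) := by
    rw [← Real.log_mul a3.ne' a4.ne']; congr 1; ring
  have e3 : (Real.log (s + 2 * x) + Real.log (s - 2 * x) - Real.log (s + 2 * y)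
      - Real.log (s - 2 * y)) / 4
      = (Real.log (s ^ 2 - 4 * x ^ 2) - Real.log (s ^ 2 - 4 * y ^ 2)) / 4 := by linarith
  rw [e3]
  have b0 : 0 < s ^ 2 - 4 * s := by nlinarith
  have b1 : s ^ 2 - 4 * s ≤ s ^ 2 - 4 * (x : ℝ) ^ 2 := by linarith
  have b2 : s ^ 2 - 4 * s ≤ s ^ 2 - 4 * (y : ℝ) ^ 2 := by linarith
  have key : ∀ a b : ℝ, a ^ 2 ≤ s → b ^ 2 ≤ s →
      Real.log (s ^ 2 - 4 * a ^ 2) - Real.log (s ^ 2 - 4 * b ^ 2)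
        ≤ 4 * (|a ^ 2 - b ^ 2| / (s ^ 2 - 4 * s)) := by
    intro a b ha hb
    refine (log_sub_le (by linarith) (by linarith)).trans ?_
    have : (s ^ 2 - 4 * a ^ 2 - (s ^ 2 - 4 * b ^ 2)) = 4 * (b ^ 2 - a ^ 2) := by ring
    rw [this, mul_div_assoc]
    have h5 : b ^ 2 - a ^ 2 ≤ |a ^ 2 - b ^ 2| := by rw [abs_sub_comm]; exact le_abs_self _
    have : (b ^ 2 - a ^ 2) / (s ^ 2 - 4 * b ^ 2) ≤ |a ^ 2 - b ^ 2| / (s ^ 2 - 4 * s) := by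
      calc _ ≤ |a ^ 2 - b ^ 2| / (s ^ 2 - 4 * b ^ 2) := by
            apply div_le_div_of_nonneg_right h5; linarith
        _ ≤ _ := by
            apply div_le_div_of_nonneg_left (abs_nonneg _) b0; linarith
    linarith
  have k1 := key x y hx hy
  have k2 := key y x hy hx
  rw [abs_sub_comm ((y : ℝ) ^ 2)] at k2
  rw [abs_le]
  constructor <;> linarith

/-- Sum of an even function over a symmetric interval of integers. -/
lemma sum_Icc_even (φ : ℤ → ℝ) (hφ : ∀ b, φ (-b) = φ b) (M : ℕ) :
    ∑ b ∈ Finset.Icc (-(M : ℤ)) M, φ b = φ 0 + 2 * ∑ j ∈ Finset.range M, φ (j + 1) := by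
  induction M with
  | zero => simp
  | succ M ih =>
    have : Finset.Icc (-((M + 1 : ℕ) : ℤ)) ((M + 1 : ℕ) : ℤ)
        = insert ((M : ℤ) + 1) (insert (-((M : ℤ) + 1)) (Finset.Icc (-(M : ℤ)) M)) := by
      ext b; simp only [Finset.mem_Icc, Finset.mem_insert]; push_cast; omega
    rw [this, Finset.sum_insert, Finset.sum_insert, ih, Finset.sum_range_succ, hφ]
    · ring
    · simp
    · simp only [Finset.mem_Icc, Finset.mem_insert]; omega

/-- Dominating weight for `hvDiff` in the wedge `|b| ≤ |a|`. -/
noncomputable def wedge (a b : ℤ) : ℝ :=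
  if a ≠ 0 ∧ |b| ≤ |a| then
    ((a : ℝ) ^ 2 - (b : ℝ) ^ 2) / ((a : ℝ) ^ 2 + (b : ℝ) ^ 2) ^ 2 + 20 / (a : ℝ) ^ 4
  else 0

lemma wedge_nonneg (a b : ℤ) : 0 ≤ wedge a b := by
  unfold wedge
  split_ifs with h
  · have : (b : ℝ) ^ 2 ≤ (a : ℝ) ^ 2 := by exact_mod_cast sq_le_sq.2 h.2
    have : 0 ≤ (a : ℝ) ^ 2 - (b : ℝ) ^ 2 := by linarith
    positivity
  · exact le_rfl

lemma abs_hvDiff_le_wedge_of_le (x y : ℤ) (hp : 9 ≤ nsq (x, y)) (h : |y| ≤ |x|) :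
    |(x : ℝ) ^ 2 - (y : ℝ) ^ 2| / (nsq (x, y) ^ 2 - 4 * nsq (x, y)) ≤ wedge x y := by
  have hyx : (y : ℝ) ^ 2 ≤ (x : ℝ) ^ 2 := by exact_mod_cast sq_le_sq.2 h
  have hs : nsq (x, y) = (x : ℝ) ^ 2 + (y : ℝ) ^ 2 := rfl
  have hx0 : x ≠ 0 := by
    rintro rfl
    have : y = 0 := by simpa using h
    subst this
    rw [hs] at hp; norm_num at hp
  unfold wedge
  rw [if_pos ⟨hx0, h⟩, abs_of_nonneg (by linarith), ← hs]
  have hx2 : 0 < (x : ℝ) ^ 2 := by positivity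
  have hxs : (x : ℝ) ^ 2 ≤ nsq (x, y) := by rw [hs]; nlinarith [sq_nonneg (y : ℝ)]
  have hd : (x : ℝ) ^ 2 - (y : ℝ) ^ 2 ≤ nsq (x, y) := by rw [hs]; nlinarith [sq_nonneg (y : ℝ)]
  have hd0 : 0 ≤ (x : ℝ) ^ 2 - (y : ℝ) ^ 2 := by linarith
  have h4 : ((x : ℝ) ^ 2) ^ 2 ≤ nsq (x, y) ^ 2 := by gcongr
  generalize nsq (x, y) = s at *
  generalize (x : ℝ) ^ 2 - (y : ℝ) ^ 2 = d at *
  have h5 : 20 / s ^ 2 ≤ 20 / (x : ℝ) ^ 4 := by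
    apply div_le_div_of_nonneg_left (by norm_num) (by positivity)
    calc (x : ℝ) ^ 4 = ((x : ℝ) ^ 2) ^ 2 := by ring
      _ ≤ _ := h4
  refine le_trans ?_ (add_le_add_right h5 _)
  rw [← add_div, div_le_div_iff₀ (by nlinarith) (by positivity)]
  have : d * s ≤ s * s := by nlinarith
  have e : (d + 20) * (s ^ 2 - 4 * s) - d * s ^ 2 = s * (20 * s - 80 - 4 * d) := by ring
  have : 0 ≤ s * (20 * s - 80 - 4 * d) := by
    apply mul_nonneg <;> linarith
  linarith

lemma nsq_swap (x y : ℤ) : nsq (y, x) = nsq (x, y) := by unfold nsq; simp; ring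

lemma abs_hvDiff_le_wedge (x y : ℤ) : |hvDiff (x, y)| ≤ wedge x y + wedge y x := by
  by_cases hp : 9 ≤ nsq (x, y)
  · refine (abs_hvDiff_le x y hp).trans ?_
    rcases le_total |y| |x| with h | h
    · linarith [abs_hvDiff_le_wedge_of_le x y hp h, wedge_nonneg y x]
    · have := abs_hvDiff_le_wedge_of_le y x (by rwa [nsq_swap]) h
      rw [nsq_swap, abs_sub_comm] at this
      linarith [wedge_nonneg x y]
  · unfold hvDiff; rw [if_neg hp]; simp
    linarith [wedge_nonneg x y, wedge_nonneg y x]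

/-- The main term of `wedge m ·` is the derivative of `b ↦ b / (m² + b²)`, which decreases on
`[0, m]`, so the column sum telescopes. -/
lemma column_aux (m : ℕ) (hm : 0 < m) (M : ℕ) :
    ∑ j ∈ Finset.range M, wedge m (j + 1)
      ≤ (min M m : ℕ) / ((m : ℝ) ^ 2 + ((min M m : ℕ) : ℝ) ^ 2)
        + (min M m : ℕ) * (20 / (m : ℝ) ^ 4) := by
  induction M with
  | zero => simp
  | succ M ih =>
    rw [Finset.sum_range_succ]
    have hm' : (0 : ℝ) < m := by exact_mod_cast hm
    rcases lt_or_ge M m with h | h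
    · rw [min_eq_left h.le] at ih
      rw [min_eq_left (by omega : M + 1 ≤ m)]
      have hw : wedge m ((M : ℤ) + 1) = ((m : ℝ) ^ 2 - ((M : ℝ) + 1) ^ 2)
          / ((m : ℝ) ^ 2 + ((M : ℝ) + 1) ^ 2) ^ 2 + 20 / (m : ℝ) ^ 4 := by
        unfold wedge
        rw [if_pos]
        · push_cast; rfl
        · constructor
          · exact_mod_cast hm.ne'
          · rw [abs_of_nonneg (by positivity), abs_of_nonneg (by positivity)]; exact_mod_cast h
      rw [hw]
      push_cast
      set b : ℝ := (M : ℝ) with hb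
      have hb0 : 0 ≤ b := Nat.cast_nonneg M
      have hbm : b + 1 ≤ m := by rw [hb]; exact_mod_cast h
      have key : ((m : ℝ) ^ 2 - (b + 1) ^ 2) / ((m : ℝ) ^ 2 + (b + 1) ^ 2) ^ 2
          ≤ (b + 1) / ((m : ℝ) ^ 2 + (b + 1) ^ 2) - b / ((m : ℝ) ^ 2 + b ^ 2) := by
        rw [div_sub_div _ _ (by positivity) (by positivity)]
        have e : (b + 1) * ((m : ℝ) ^ 2 + b ^ 2) - ((m : ℝ) ^ 2 + (b + 1) ^ 2) * b
          = (m : ℝ) ^ 2 - b * (b + 1) := by ring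
        rw [e]
        apply div_le_div₀
        · nlinarith
        · nlinarith
        · positivity
        · rw [pow_two ((m : ℝ) ^ 2 + (b + 1) ^ 2)]
          apply mul_le_mul_of_nonneg_left _ (by positivity)
          nlinarith
      nlinarith
    · rw [min_eq_right h] at ih
      rw [min_eq_right (by omega : m ≤ M + 1)]
      have hw : wedge m ((M : ℤ) + 1) = 0 := by
        unfold wedge
        rw [if_neg]
        rintro ⟨-, h'⟩
        rw [abs_of_nonneg (by positivity), abs_of_nonneg (by positivity)] at h'
        omega
      rw [hw, add_zero]; exact ih

lemma column_le (m M : ℕ) :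
    ∑ b ∈ Finset.Icc (-(M : ℤ)) M, wedge m b ≤ 1 / (m : ℝ) + 61 / (m : ℝ) ^ 2 := by
  rcases Nat.eq_zero_or_pos m with rfl | hm
  · simp [wedge]
  rw [sum_Icc_even _ (by intro b; unfold wedge; simp)]
  have hm1 : (1 : ℝ) ≤ m := by exact_mod_cast hm
  have h1 := column_aux m hm M
  have h2 : ((min M m : ℕ) : ℝ) ≤ m := by exact_mod_cast min_le_right _ _
  set k : ℝ := ((min M m : ℕ) : ℝ)
  have hk : 0 ≤ k := by positivity
  have h3 : k / ((m : ℝ) ^ 2 + k ^ 2) ≤ 1 / (2 * m) := by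
    rw [div_le_div_iff₀ (by positivity) (by positivity)]
    nlinarith [sq_nonneg ((m : ℝ) - k)]
  have h4 : k * (20 / (m : ℝ) ^ 4) ≤ 20 / (m : ℝ) ^ 2 := by
    rw [mul_div_assoc', div_le_div_iff₀ (by positivity) (by positivity)]
    have : k * 20 * (m : ℝ) ^ 2 ≤ m * 20 * (m : ℝ) ^ 2 := by gcongr
    nlinarith [pow_pos (show (0 : ℝ) < m by linarith) 3]
  have h5 : wedge m 0 ≤ 21 / (m : ℝ) ^ 2 := by
    unfold wedge
    rw [if_pos (by simp; omega)]
    have : (20 : ℝ) / (m : ℝ) ^ 4 ≤ 20 / (m : ℝ) ^ 2 := by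
      apply div_le_div_of_nonneg_left (by norm_num) (by positivity)
      exact pow_le_pow_right₀ hm1 (by norm_num)
    have e : (((m : ℤ) : ℝ) ^ 2 - ((0 : ℤ) : ℝ) ^ 2) / (((m : ℤ) : ℝ) ^ 2 + ((0 : ℤ) : ℝ) ^ 2) ^ 2
        = 1 / (m : ℝ) ^ 2 := by
      push_cast; field_simp; ring
    rw [e]; push_cast
    have : (21 : ℝ) / (m : ℝ) ^ 2 = 1 / (m : ℝ) ^ 2 + 20 / (m : ℝ) ^ 2 := by ring
    linarith
  have e : 1 / (m : ℝ) + 61 / (m : ℝ) ^ 2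
      = 21 / (m : ℝ) ^ 2 + 2 * (1 / (2 * m) + 20 / (m : ℝ) ^ 2) := by field_simp; ring
  rw [e]
  linarith

lemma sum_inv_sq_le (M : ℕ) : ∑ j ∈ Finset.range M, 1 / ((j : ℝ) + 1) ^ 2 ≤ 2 := by
  have : ∀ M : ℕ, ∑ j ∈ Finset.range (M + 1), 1 / ((j : ℝ) + 1) ^ 2 ≤ 2 - 1 / ((M : ℝ) + 1) := by
    intro M
    induction M with
    | zero => simp; norm_num
    | succ M ih =>
      rw [Finset.sum_range_succ]
      have : 1 / (((M + 1 : ℕ) : ℝ) + 1) ^ 2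
          ≤ 1 / ((M : ℝ) + 1) - 1 / (((M + 1 : ℕ) : ℝ) + 1) := by
        push_cast
        rw [div_sub_div _ _ (by positivity) (by positivity),
          div_le_div_iff₀ (by positivity) (by positivity)]
        nlinarith
      linarith
  rcases M with _ | M
  · simp
  · refine (this M).trans ?_
    have : 0 ≤ 1 / ((M : ℝ) + 1) := by positivity
    linarith

lemma sum_columns_le (M : ℕ) :
    ∑ a ∈ Finset.Icc (-(M : ℤ)) M, ∑ b ∈ Finset.Icc (-(M : ℤ)) M, wedge a b
      ≤ 2 * Real.log M + 246 := by
  have hcol : ∀ a : ℤ, ∑ b ∈ Finset.Icc (-(M : ℤ)) M, wedge a b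
      ≤ 1 / |(a : ℝ)| + 61 / (a : ℝ) ^ 2 := by
    intro a
    have h := column_le a.natAbs M
    have e : ((a.natAbs : ℕ) : ℝ) = |(a : ℝ)| := by
      rw [← Int.cast_natCast, Int.natCast_natAbs, Int.cast_abs]
    rw [e, sq_abs] at h
    refine le_trans (le_of_eq ?_) h
    refine Finset.sum_congr rfl fun b _ => ?_
    unfold wedge
    rw [Int.natCast_natAbs]
    have : (|a| ≠ 0) ↔ a ≠ 0 := by simp
    simp only [abs_abs, this, Int.cast_abs, sq_abs]
    congr 3
    rw [← abs_pow, abs_of_nonneg (by positivity)]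
  refine (Finset.sum_le_sum fun a _ => hcol a).trans ?_
  rw [sum_Icc_even _ (by intro b; simp)]
  have h1 : ∑ j ∈ Finset.range M, (1 / |(((j : ℤ) + 1 : ℤ) : ℝ)| + 61 / (((j : ℤ) + 1 : ℤ) : ℝ) ^ 2)
      = (harmonic M : ℝ) + 61 * ∑ j ∈ Finset.range M, 1 / ((j : ℝ) + 1) ^ 2 := by
    rw [Finset.sum_add_distrib, Finset.mul_sum]
    congr 1
    · unfold harmonic
      push_cast
      refine Finset.sum_congr rfl fun j _ => ?_
      rw [abs_of_nonneg (by positivity), one_div]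
    · refine Finset.sum_congr rfl fun j _ => ?_
      push_cast; ring
  rw [h1]
  have h2 := harmonic_le_one_add_log M
  have h3 := sum_inv_sq_le M
  have h0 : 1 / |((0 : ℤ) : ℝ)| + 61 / ((0 : ℤ) : ℝ) ^ 2 = 0 := by simp
  rw [h0]
  linarith

/-- The sum of `|hvDiff|` over `t` sites is at most `2 log t + O(1)`: `|hvDiff|` behaves like
`|x² - y²| / |p|⁴`, so the worst sets are essentially balls of radius of order `√t`. -/
lemma sum_abs_hvDiff_le (W : Finset Z2) (t : ℕ) (ht : 0 < t) (hW : W.card ≤ t) :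
    ∑ p ∈ W, |hvDiff p| ≤ 2 * Real.log t + 498 := by
  set M := Nat.sqrt t + 1 with hMdef
  have hM : 0 < M := by omega
  have hMt : t ≤ M * M := by
    exact (Nat.lt_succ_sqrt t).le
  have hMt2 : M * M ≤ 4 * t := by
    have h1 := Nat.sqrt_le t
    have h2 : 1 ≤ Nat.sqrt t := Nat.sqrt_pos.2 ht
    nlinarith
  set Bx : Finset Z2 := Finset.Icc (-(M : ℤ)) M ×ˢ Finset.Icc (-(M : ℤ)) M with hBx
  have hsplit : ∀ p ∈ W, |hvDiff p| ≤ (if p ∈ Bx then |hvDiff p| else 0) + 2 / (M : ℝ) ^ 2 := by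
    intro p _
    obtain ⟨x, y⟩ := p
    by_cases hb : (x, y) ∈ Bx
    · rw [if_pos hb]
      have : 0 ≤ 2 / (M : ℝ) ^ 2 := by positivity
      linarith
    · rw [if_neg hb, zero_add]
      by_cases hp : 9 ≤ nsq (x, y)
      · refine (abs_hvDiff_le x y hp).trans ?_
        have hs : nsq (x, y) = (x : ℝ) ^ 2 + (y : ℝ) ^ 2 := rfl
        have hd : |(x : ℝ) ^ 2 - (y : ℝ) ^ 2| ≤ nsq (x, y) := by
          rw [hs, abs_le]; constructor <;> nlinarith [sq_nonneg (x : ℝ), sq_nonneg (y : ℝ)]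
        have hMs : (M : ℝ) ^ 2 ≤ nsq (x, y) := by
          have : (M : ℤ) ^ 2 ≤ x ^ 2 + y ^ 2 := by
            have h : (M : ℤ) < |x| ∨ (M : ℤ) < |y| := by
              by_contra hcon
              push Not at hcon
              apply hb
              rw [hBx, Finset.mem_product, Finset.mem_Icc, Finset.mem_Icc]
              exact ⟨abs_le.1 hcon.1, abs_le.1 hcon.2⟩
            rcases h with h | h
            · have := sq_abs x
              nlinarith [sq_nonneg y]
            · have := sq_abs y
              nlinarith [sq_nonneg x]
          rw [hs]; exact_mod_cast this
        have hM0 : (0 : ℝ) < (M : ℝ) ^ 2 := by positivity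
        generalize nsq (x, y) = s at *
        generalize |(x : ℝ) ^ 2 - (y : ℝ) ^ 2| = d at *
        rw [div_le_div_iff₀ (by nlinarith) hM0]
        have : d * (M : ℝ) ^ 2 ≤ s * s := by
          apply mul_le_mul hd hMs hM0.le; linarith
        nlinarith
      · unfold hvDiff; rw [if_neg hp, abs_zero]; positivity
  refine (Finset.sum_le_sum hsplit).trans ?_
  rw [Finset.sum_add_distrib, Finset.sum_const, nsmul_eq_mul]
  have h1 : (W.card : ℝ) * (2 / (M : ℝ) ^ 2) ≤ 2 := by
    rw [mul_div_assoc', div_le_iff₀ (by positivity)]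
    have : (W.card : ℝ) ≤ (M : ℝ) * M := by exact_mod_cast hW.trans hMt
    nlinarith
  have h2 : ∑ p ∈ W, (if p ∈ Bx then |hvDiff p| else 0) ≤ ∑ p ∈ Bx, |hvDiff p| := by
    rw [← Finset.sum_filter]
    apply Finset.sum_le_sum_of_subset_of_nonneg
    · intro p hp; exact (Finset.mem_filter.1 hp).2
    · intros; exact abs_nonneg _
  have h3 : ∑ p ∈ Bx, |hvDiff p| ≤ 2 * (2 * Real.log M + 246) := by
    rw [hBx]
    refine (Finset.sum_le_sum fun p _ => abs_hvDiff_le_wedge p.1 p.2).trans ?_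
    rw [Finset.sum_add_distrib, Finset.sum_product, Finset.sum_product_right]
    have := sum_columns_le M
    dsimp only
    linarith
  have h4 : 2 * Real.log M ≤ Real.log t + 2 := by
    have hM' : (M : ℝ) ≠ 0 := by positivity
    have e : 2 * Real.log M = Real.log ((M : ℝ) * M) := by
      rw [Real.log_mul hM' hM']; ring
    have : Real.log ((M : ℝ) * M) ≤ Real.log (4 * t) := by
      apply Real.log_le_log (by positivity)
      exact_mod_cast hMt2
    rw [← e, Real.log_mul (by norm_num) (by positivity)] at this
    have h6 : Real.log 4 ≤ 2 := by
      have : (4 : ℝ) = 2 ^ 2 := by norm_num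
      rw [this, Real.log_pow]
      have := Real.log_two_lt_d9
      push_cast; linarith
    linarith
  linarith

end HV

/-! ### The law of one step -/

namespace HV

/-- `Φ` is a function of the first `t` moves. -/
def Adapted {β : Type*} (t : ℕ) (Φ : Path → β) : Prop :=
  ∀ y y' : Path, (∀ s < t, y s = y' s) → Φ y = Φ y'

lemma Adapted.mono {β : Type*} {t t' : ℕ} (h : t ≤ t') {Φ : Path → β} (hΦ : Adapted t Φ) :
    Adapted t' Φ := fun y y' hy => hΦ y y' fun s hs => hy s (hs.trans_le h)

lemma adapted_seq (n : ℕ) (hn : 0 < n) (ρ : Config) (t : ℕ) :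
    Adapted t (fun y => seq n hn ρ y t) := by
  induction t with
  | zero => intro y y' _; rfl
  | succ t ih =>
    intro y y' h
    have h1 : seq n hn ρ y t = seq n hn ρ y' t := ih y y' fun s hs => h s (by omega)
    simp only [seq, h1, h t (by omega)]

lemma Adapted.update {β : Type*} {t : ℕ} {Φ : Path → β} (hΦ : Adapted t Φ) (y : Path) (z : Z2) :
    Φ (Function.update y t z) = Φ y :=
  hΦ _ _ fun s hs => by rw [Function.update_of_ne hs.ne]

/-- Extension of a finite word to a path by the constant value `0`. -/
def ext (t : ℕ) (c : Fin t → Z2) : Path := fun s => if h : s < t then c ⟨s, h⟩ else 0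

lemma Adapted.ext_eq {β : Type*} {t : ℕ} {Φ : Path → β} (hΦ : Adapted t Φ) (y : Path) :
    Φ (ext t fun s => y s) = Φ y :=
  hΦ _ _ fun s hs => by simp [ext, hs]

lemma Adapted.measurable {β : Type*} [MeasurableSpace β] {t : ℕ} {Φ : Path → β}
    (hΦ : Adapted t Φ) : Measurable Φ := by
  have : Φ = (fun c : Fin t → Z2 => Φ (ext t c)) ∘ (fun (y : Path) (s : Fin t) => y s) := by
    funext y; exact (hΦ.ext_eq y).symm
  rw [this]
  exact (measurable_of_countable _).comp (by fun_prop)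

section
variable {q : ℝ} {n : ℕ} {hn : 0 < n} {ρ : Config} {μ : Measure Path}

lemma law_prefix (hμ : IsLaw q n hn ρ μ) (t : ℕ) (c : Fin t → Z2) :
    μ ((fun (y : Path) (s : Fin t) => y s) ⁻¹' {c}) =
      ∏ s ∈ Finset.range t, weight q n (seq n hn ρ (ext t c) s) (active n hn s) (ext t c s) := by
  rw [← hμ t (ext t c)]
  congr 1
  ext y
  simp only [Set.mem_preimage, Set.mem_singleton_iff, Set.mem_ofPred_eq]
  constructor
  · rintro rfl s hs; simp [ext, hs]
  · intro h; funext s; rw [h s s.2]; simp [ext]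

/-- One step of the walk: the last move of a function of `t + 1` moves can be averaged with respect
to the transition probabilities. -/
lemma lintegral_step (hμ : IsLaw q n hn ρ μ) (t : ℕ) (Φ : Path → ℝ≥0∞) (hΦ : Adapted (t + 1) Φ) :
    ∫⁻ y, Φ y ∂μ = ∫⁻ y, ∑' z, weight q n (seq n hn ρ y t) (active n hn t) z *
      Φ (Function.update y t z) ∂μ := by
  set π : Path → (Fin t → Z2) := fun y s => y s with hπ
  have hπm : Measurable π := by fun_prop
  set Ψ : Path → ℝ≥0∞ := fun y => ∑' z, weight q n (seq n hn ρ y t) (active n hn t) z *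
      Φ (Function.update y t z) with hΨ
  have hΨa : Adapted t Ψ := by
    intro y y' h
    have hst : seq n hn ρ y t = seq n hn ρ y' t := adapted_seq n hn ρ t y y' h
    simp only [hΨ, hst]
    refine tsum_congr fun z => ?_
    congr 1
    apply hΦ
    intro s hs
    rcases Nat.lt_succ_iff_lt_or_eq.1 hs with h' | rfl
    · rw [Function.update_of_ne h'.ne, Function.update_of_ne h'.ne, h s h']
    · simp
  have hR : ∫⁻ y, Ψ y ∂μ = ∑' c, Ψ (ext t c) * μ (π ⁻¹' {c}) := by
    have : ∫⁻ y, Ψ y ∂μ = ∫⁻ c, Ψ (ext t c) ∂(μ.map π) := by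
      rw [lintegral_map (measurable_of_countable _) hπm]
      exact lintegral_congr fun y => (hΨa.ext_eq y).symm
    rw [this, lintegral_countable']
    refine tsum_congr fun c => ?_
    rw [Measure.map_apply hπm (measurableSet_singleton c)]
  have hL : ∫⁻ y, Φ y ∂μ = ∑' c, ∑' z, Φ (Function.update (ext t c) t z) *
      μ {y | π y = c ∧ y t = z} := by
    have hm : Measurable (fun y : Path => (π y, y t)) := hπm.prodMk (measurable_pi_apply t)
    have : ∫⁻ y, Φ y ∂μ = ∫⁻ c, Φ (Function.update (ext t c.1) t c.2)
        ∂(μ.map (fun y => (π y, y t))) := by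
      rw [lintegral_map (measurable_of_countable _) hm]
      refine lintegral_congr fun y => hΦ _ _ fun s hs => ?_
      rcases Nat.lt_succ_iff_lt_or_eq.1 hs with h' | rfl
      · rw [Function.update_of_ne h'.ne]; simp [ext, h', hπ]
      · simp
    rw [this, lintegral_countable', ENNReal.tsum_prod']
    refine tsum_congr fun c => tsum_congr fun z => ?_
    rw [Measure.map_apply hm (measurableSet_singleton _)]
    congr 2
    ext y
    simp [Prod.ext_iff]
  rw [hL, hR]
  refine tsum_congr fun c => ?_
  rw [← ENNReal.tsum_mul_right]
  refine tsum_congr fun z => ?_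
  have key : μ {y | π y = c ∧ y t = z} =
      weight q n (seq n hn ρ (ext t c) t) (active n hn t) z * μ (π ⁻¹' {c}) := by
    have hset : {y : Path | π y = c ∧ y t = z}
        = {y | ∀ s < t + 1, y s = Function.update (ext t c) t z s} := by
      ext y
      simp only [Set.mem_ofPred_eq]
      constructor
      · rintro ⟨rfl, rfl⟩ s hs
        rcases Nat.lt_succ_iff_lt_or_eq.1 hs with h' | rfl
        · rw [Function.update_of_ne h'.ne]; simp [ext, h', hπ]
        · simp
      · intro h
        constructor
        · funext s
          rw [hπ]
          simp only
          rw [h s (by omega), Function.update_of_ne s.2.ne]; simp [ext]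
        · rw [h t (by omega)]; simp
    rw [hset, hμ, Finset.prod_range_succ, hπ, law_prefix hμ, mul_comm]
    congr 1
    · rw [(adapted_seq n hn ρ t).update (ext t c) z]; simp
    · refine Finset.prod_congr rfl fun s hs => ?_
      have hs' := Finset.mem_range.1 hs
      rw [Function.update_of_ne hs'.ne,
        ((adapted_seq n hn ρ s).mono hs'.le).update (ext t c) z]
  rw [key]; ring

/-- Averaging over the four possible moves. -/
lemma tsum_weight (s : State n) (i : Fin n) (ψ : Z2 → ℝ≥0∞) :
    ∑' z, weight q n s i z * ψ z =
      ENNReal.ofReal ((if s.2 (s.1 i) then 1 - q else q) / 2) *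
        (ψ (s.1 i + (1, 0)) + ψ (s.1 i - (1, 0))) +
      ENNReal.ofReal ((if s.2 (s.1 i) then q else 1 - q) / 2) *
        (ψ (s.1 i + (0, 1)) + ψ (s.1 i - (0, 1))) := by
  rw [tsum_eq_sum (s := {s.1 i + (1, 0), s.1 i - (1, 0), s.1 i + (0, 1), s.1 i - (0, 1)})]
  · rw [Finset.sum_insert, Finset.sum_insert, Finset.sum_insert, Finset.sum_singleton]
    · have w1 : weight q n s i (s.1 i + (1, 0))
          = ENNReal.ofReal ((if s.2 (s.1 i) then 1 - q else q) / 2) := by simp [weight]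
      have w2 : weight q n s i (s.1 i - (1, 0))
          = ENNReal.ofReal ((if s.2 (s.1 i) then 1 - q else q) / 2) := by simp [weight]
      have w3 : weight q n s i (s.1 i + (0, 1))
          = ENNReal.ofReal ((if s.2 (s.1 i) then q else 1 - q) / 2) := by
        simp [weight, Prod.ext_iff]
      have w4 : weight q n s i (s.1 i - (0, 1))
          = ENNReal.ofReal ((if s.2 (s.1 i) then q else 1 - q) / 2) := by
        simp [weight, Prod.ext_iff]
      rw [w1, w2, w3, w4]; ring
    all_goals
      simp only [Finset.mem_insert, Finset.mem_singleton, Prod.ext_iff, Prod.fst_add, Prod.snd_add,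
        Prod.fst_sub, Prod.snd_sub]
      omega
  · intro z hz
    simp only [Finset.mem_insert, Finset.mem_singleton, not_or] at hz
    simp [weight, hz]

/-- Real version of `tsum_weight`. -/
lemma tsum_weight_ofReal (hq : q ∈ Set.Ioc (0 : ℝ) 1) (s : State n) (i : Fin n) (ψ : Z2 → ℝ)
    (h1 : 0 ≤ ψ (s.1 i + (1, 0))) (h2 : 0 ≤ ψ (s.1 i - (1, 0)))
    (h3 : 0 ≤ ψ (s.1 i + (0, 1))) (h4 : 0 ≤ ψ (s.1 i - (0, 1))) :
    ∑' z, weight q n s i z * ENNReal.ofReal (ψ z) =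
      ENNReal.ofReal ((if s.2 (s.1 i) then 1 - q else q) / 2 *
        (ψ (s.1 i + (1, 0)) + ψ (s.1 i - (1, 0))) +
      (if s.2 (s.1 i) then q else 1 - q) / 2 *
        (ψ (s.1 i + (0, 1)) + ψ (s.1 i - (0, 1)))) := by
  obtain ⟨hq0, hq1⟩ := hq
  have a1 : (0 : ℝ) ≤ (if s.2 (s.1 i) then 1 - q else q) / 2 := by split_ifs <;> linarith
  have a2 : (0 : ℝ) ≤ (if s.2 (s.1 i) then q else 1 - q) / 2 := by split_ifs <;> linarith
  rw [tsum_weight, ENNReal.ofReal_add (by positivity) (by positivity),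
    ENNReal.ofReal_mul a1, ENNReal.ofReal_mul a2, ENNReal.ofReal_add h1 h2,
    ENNReal.ofReal_add h3 h4]

end

end HV

/-! ### Second moments and occupation of boxes -/

namespace HV

section
variable {q : ℝ} {n : ℕ} {hn : 0 < n} {ρ : Config} {μ : Measure Path}

/-- The position of the walker that is about to move at time `t`. -/
def site (n : ℕ) (hn : 0 < n) (ρ : Config) (y : Path) (t : ℕ) : Z2 :=
  (seq n hn ρ y t).1 (active n hn t)

lemma adapted_site (t : ℕ) : Adapted t (fun y => site n hn ρ y t) := fun y y' h => by
  have hst : seq n hn ρ y t = seq n hn ρ y' t := adapted_seq n hn ρ t y y' h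
  simp only [site, hst]

lemma seq_succ (y : Path) (t : ℕ) :
    seq n hn ρ y (t + 1) = apply' n (seq n hn ρ y t) (active n hn t) (y t) := rfl

lemma seq_update_self (y : Path) (t : ℕ) (z : Z2) :
    seq n hn ρ (Function.update y t z) t = seq n hn ρ y t :=
  (adapted_seq n hn ρ t).update y z

lemma seq_update_succ (y : Path) (t : ℕ) (z : Z2) :
    seq n hn ρ (Function.update y t z) (t + 1)
      = apply' n (seq n hn ρ y t) (active n hn t) z := by
  rw [seq_succ, seq_update_self, Function.update_self]

lemma sum_apply' (φ : Z2 → ℝ) (s : State n) (i : Fin n) (z : Z2) :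
    ∑ j, φ ((apply' n s i z).1 j) = ∑ j, φ (s.1 j) - φ (s.1 i) + φ z := by
  have h1 : ∀ j, φ ((apply' n s i z).1 j) = Function.update (fun j => φ (s.1 j)) i (φ z) j := by
    intro j
    by_cases hj : j = i
    · subst hj; simp [apply']
    · simp [apply', Function.update_of_ne hj]
  simp_rw [h1]
  rw [Finset.sum_update_of_mem (Finset.mem_univ i), ← Finset.sum_erase_add _ _ (Finset.mem_univ i),
    Finset.sdiff_singleton_eq_erase]
  ring

/-- Expected one-step change of an additive functional of the positions. -/
lemma lintegral_sum_step (hq : q ∈ Set.Ioc (0 : ℝ) 1) (hμ : IsLaw q n hn ρ μ)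
    (φ : Z2 → ℝ) (hφ : ∀ p, 0 ≤ φ p) (t : ℕ) :
    ∃ p : Path → ℝ, (∀ y, 0 ≤ p y ∧ p y ≤ 1) ∧
    ∫⁻ y, ENNReal.ofReal (∑ j, φ ((seq n hn ρ y (t + 1)).1 j)) ∂μ =
    ∫⁻ y, ENNReal.ofReal (∑ j, φ ((seq n hn ρ y t).1 j)
      + p y / 2 * (φ (site n hn ρ y t + (1, 0)) + φ (site n hn ρ y t - (1, 0))
          - 2 * φ (site n hn ρ y t))
      + (1 - p y) / 2 * (φ (site n hn ρ y t + (0, 1)) + φ (site n hn ρ y t - (0, 1))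
          - 2 * φ (site n hn ρ y t))) ∂μ := by
  refine ⟨fun y => if (seq n hn ρ y t).2 (site n hn ρ y t) then 1 - q else q, ?_, ?_⟩
  · intro y
    obtain ⟨hq0, hq1⟩ := hq
    dsimp only
    split_ifs <;> constructor <;> linarith
  rw [lintegral_step hμ t]
  · refine lintegral_congr fun y => ?_
    simp_rw [seq_update_succ]
    have hnn : ∀ z, 0 ≤ ∑ j, φ ((apply' n (seq n hn ρ y t) (active n hn t) z).1 j) :=
      fun z => Finset.sum_nonneg fun _ _ => hφ _
    rw [tsum_weight_ofReal hq (ψ := fun z =>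
      ∑ j, φ ((apply' n (seq n hn ρ y t) (active n hn t) z).1 j)) _ _ (hnn _) (hnn _) (hnn _)
      (hnn _)]
    simp_rw [sum_apply']
    congr 1
    unfold site
    split_ifs <;> ring
  · intro y y' h
    have hst : seq n hn ρ y (t + 1) = seq n hn ρ y' (t + 1) := adapted_seq n hn ρ (t + 1) y y' h
    simp only [hst]

/-- Every step has length one and mean zero, so the sum of the squared norms grows by one. -/
lemma lintegral_nsq [IsProbabilityMeasure μ] (hq : q ∈ Set.Ioc (0 : ℝ) 1)
    (hμ : IsLaw q n hn ρ μ) (t : ℕ) :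
    ∫⁻ y, ENNReal.ofReal (∑ j, nsq ((seq n hn ρ y t).1 j)) ∂μ = t := by
  induction t with
  | zero => simp [seq, nsq]
  | succ t ih =>
    obtain ⟨p, -, h⟩ := lintegral_sum_step hq hμ nsq nsq_nonneg t
    rw [h]
    have : ∀ y, ENNReal.ofReal (∑ j, nsq ((seq n hn ρ y t).1 j)
      + p y / 2 * (nsq (site n hn ρ y t + (1, 0)) + nsq (site n hn ρ y t - (1, 0))
          - 2 * nsq (site n hn ρ y t))
      + (1 - p y) / 2 * (nsq (site n hn ρ y t + (0, 1)) + nsq (site n hn ρ y t - (0, 1))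
          - 2 * nsq (site n hn ρ y t)))
        = ENNReal.ofReal (∑ j, nsq ((seq n hn ρ y t).1 j)) + 1 := by
      intro y
      rw [← ENNReal.ofReal_one,
        ← ENNReal.ofReal_add (Finset.sum_nonneg fun _ _ => nsq_nonneg _) zero_le_one]
      congr 1
      unfold nsq
      simp
      ring
    simp_rw [this]
    rw [lintegral_add_right _ measurable_const, ih]
    simp

/-- `∑_{|j| ≤ r} |x - j|`, a convex function whose second difference is `2` on `[-r, r]` and `0`
elsewhere. -/
noncomputable def tent (r : ℕ) (x : ℤ) : ℝ := ∑ j ∈ Finset.Icc (-(r : ℤ)) r, |(x : ℝ) - j|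

lemma tent_nonneg (r : ℕ) (x : ℤ) : 0 ≤ tent r x := Finset.sum_nonneg fun _ _ => abs_nonneg _

lemma tent_second_diff (r : ℕ) (x : ℤ) :
    tent r (x + 1) + tent r (x - 1) - 2 * tent r x = if |x| ≤ r then 2 else 0 := by
  unfold tent
  rw [Finset.mul_sum, ← Finset.sum_add_distrib, ← Finset.sum_sub_distrib]
  have : ∀ j ∈ Finset.Icc (-(r : ℤ)) r,
      |((x + 1 : ℤ) : ℝ) - j| + |((x - 1 : ℤ) : ℝ) - j| - 2 * |(x : ℝ) - j|
        = if x = j then 2 else 0 := by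
    intro j _
    have e : |x + 1 - j| + |x - 1 - j| - 2 * |x - j| = if x = j then 2 else 0 := by
      rcases abs_cases (x + 1 - j) with h1 | h1 <;> rcases abs_cases (x - 1 - j) with h2 | h2 <;>
        rcases abs_cases (x - j) with h3 | h3 <;> split_ifs <;> omega
    have := congrArg (fun k : ℤ => (k : ℝ)) e
    push_cast at this ⊢
    exact this
  rw [Finset.sum_congr rfl this, Finset.sum_ite_eq]
  simp only [Finset.mem_Icc, abs_le]

lemma tent_le (r : ℕ) (x : ℤ) : tent r x ≤ (2 * r + 1) * (|(x : ℝ)| + r) := by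
  unfold tent
  have : ∀ j ∈ Finset.Icc (-(r : ℤ)) r, |(x : ℝ) - j| ≤ |(x : ℝ)| + r := by
    intro j hj
    have hj' : |(j : ℝ)| ≤ r := by
      have : |j| ≤ (r : ℤ) := abs_le.2 (Finset.mem_Icc.1 hj)
      exact_mod_cast this
    linarith [abs_sub (x : ℝ) j]
  refine (Finset.sum_le_card_nsmul _ _ _ this).trans (le_of_eq ?_)
  rw [Int.card_Icc, nsmul_eq_mul]
  congr 1
  have : ((r : ℤ) + 1 - -(r : ℤ)).toNat = 2 * r + 1 := by omega
  rw [this]; push_cast; ring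

/-- The square box of half-side `r`. -/
def InBox (r : ℕ) (p : Z2) : Prop := |p.1| ≤ r ∧ |p.2| ≤ r

/-- The walkers spend little time in a box: each step taken from the box increases the convex
functional `tent r x + tent r y` by at least one on average, whereas this functional is
`O(r √T)` in mean at time `T`. The parameter `N` is of order `√T` in the application. -/
lemma sum_box_le [IsProbabilityMeasure μ] (hq : q ∈ Set.Ioc (0 : ℝ) 1)
    (hμ : IsLaw q n hn ρ μ) (r T : ℕ) (N : ℝ) (hN : 0 < N) :
    ∑ t ∈ Finset.range T, μ {y | InBox r (site n hn ρ y t)} ≤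
      ENNReal.ofReal ((2 * r + 1) * (n * (2 * r + 2 * N) + T / N)) := by
  set φ : Z2 → ℝ := fun p => tent r p.1 + tent r p.2 with hφ
  have hφ0 : ∀ p, 0 ≤ φ p := fun p => add_nonneg (tent_nonneg _ _) (tent_nonneg _ _)
  have step : ∀ T, ∑ t ∈ Finset.range T, μ {y | InBox r (site n hn ρ y t)} ≤
      ∫⁻ y, ENNReal.ofReal (∑ j, φ ((seq n hn ρ y T).1 j)) ∂μ := by
    intro T
    induction T with
    | zero => simp
    | succ T ih =>
      rw [Finset.sum_range_succ]
      obtain ⟨p, hp, h⟩ := lintegral_sum_step hq hμ φ hφ0 T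
      rw [h]
      have hset : MeasurableSet {y | InBox r (site n hn ρ y T)} := by
        have : Measurable (fun y => site n hn ρ y T) := (adapted_site T).measurable
        exact this (Set.to_countable {p | InBox r p}).measurableSet
      rw [← lintegral_indicator_one hset]
      refine (add_le_add_left ih _).trans ?_
      rw [← lintegral_add_right _ (measurable_one.indicator hset)]
      refine lintegral_mono fun y => ?_
      obtain ⟨hp0, hp1⟩ := hp y
      have hS : 0 ≤ ∑ j, φ ((seq n hn ρ y T).1 j) := Finset.sum_nonneg fun _ _ => hφ0 _
      set x := site n hn ρ y T with hx
      have e1 : φ (x + (1, 0)) + φ (x - (1, 0)) - 2 * φ x = if |x.1| ≤ r then 2 else 0 := by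
        rw [← tent_second_diff]; simp [hφ]; ring
      have e2 : φ (x + (0, 1)) + φ (x - (0, 1)) - 2 * φ x = if |x.2| ≤ r then 2 else 0 := by
        rw [← tent_second_diff]; simp [hφ]; ring
      rw [e1, e2]
      by_cases hb : InBox r x
      · rw [Set.indicator_of_mem (by exact hb), if_pos hb.1, if_pos hb.2, Pi.one_apply,
          ← ENNReal.ofReal_one, ← ENNReal.ofReal_add hS zero_le_one]
        apply ENNReal.ofReal_le_ofReal
        linarith
      · rw [Set.indicator_of_notMem (by exact hb), add_zero]
        apply ENNReal.ofReal_le_ofReal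
        have a1 : 0 ≤ p y / 2 * (if |x.1| ≤ r then 2 else 0 : ℝ) := by
          apply mul_nonneg (by linarith); split_ifs <;> norm_num
        have a2 : 0 ≤ (1 - p y) / 2 * (if |x.2| ≤ r then 2 else 0 : ℝ) := by
          apply mul_nonneg (by linarith); split_ifs <;> norm_num
        linarith
  refine (step T).trans ?_
  have habs : ∀ a : ℝ, |a| ≤ a ^ 2 / N + N := by
    intro a
    rcases le_total |a| N with h | h
    · have : 0 ≤ a ^ 2 / N := by positivity
      linarith
    · have : |a| ≤ a ^ 2 / N := by
        rw [le_div_iff₀ hN, ← sq_abs]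
        nlinarith [abs_nonneg a]
      linarith
  have hpt : ∀ y, ENNReal.ofReal (∑ j, φ ((seq n hn ρ y T).1 j)) ≤
      ENNReal.ofReal ((2 * r + 1) * (n * (2 * r + 2 * N))) +
        ENNReal.ofReal ((2 * r + 1) / N) *
          ENNReal.ofReal (∑ j, nsq ((seq n hn ρ y T).1 j)) := by
    intro y
    rw [← ENNReal.ofReal_mul (by positivity), ← ENNReal.ofReal_add (by positivity)
      (mul_nonneg (by positivity) (Finset.sum_nonneg fun _ _ => nsq_nonneg _))]
    apply ENNReal.ofReal_le_ofReal
    have : ∀ j ∈ (Finset.univ : Finset (Fin n)), φ ((seq n hn ρ y T).1 j) ≤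
        (2 * r + 1) * (2 * r + 2 * N) + (2 * r + 1) / N * nsq ((seq n hn ρ y T).1 j) := by
      intro j _
      generalize (seq n hn ρ y T).1 j = p
      have h1 := tent_le r p.1
      have h2 := tent_le r p.2
      have h3 : (2 * (r : ℝ) + 1) * (|(p.1 : ℝ)| + |(p.2 : ℝ)|)
          ≤ (2 * r + 1) * (((p.1 : ℝ) ^ 2 / N + N) + ((p.2 : ℝ) ^ 2 / N + N)) := by
        have := habs p.1
        have := habs p.2
        gcongr
      have h4 : (2 * (r : ℝ) + 1) / N * nsq p
          = (2 * r + 1) * ((p.1 : ℝ) ^ 2 / N + (p.2 : ℝ) ^ 2 / N) := by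
        unfold nsq; ring
      rw [h4]
      simp only [hφ]
      linarith
    refine (Finset.sum_le_sum this).trans (le_of_eq ?_)
    rw [Finset.sum_add_distrib, Finset.sum_const, Finset.card_univ, Fintype.card_fin,
      nsmul_eq_mul, ← Finset.mul_sum]
    ring
  refine (lintegral_mono hpt).trans ?_
  have hm : Measurable fun y => ENNReal.ofReal (∑ j, nsq ((seq n hn ρ y T).1 j)) := by
    apply Adapted.measurable (t := T)
    intro y y' h
    have hst : seq n hn ρ y T = seq n hn ρ y' T := adapted_seq n hn ρ T y y' h
    simp only [hst]
  rw [lintegral_add_left measurable_const, lintegral_const_mul _ hm, lintegral_nsq hq hμ,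
    lintegral_const, measure_univ, mul_one, ← ENNReal.ofReal_natCast T,
    ← ENNReal.ofReal_mul (by positivity), ← ENNReal.ofReal_add (by positivity) (by positivity)]
  apply ENNReal.ofReal_le_ofReal
  apply le_of_eq
  ring

end

end HV

/-! ### The supermartingale with label correction -/

namespace HV

section
variable {q : ℝ} {n : ℕ} {hn : 0 < n} {ρ : Config} {μ : Measure Path}

/-- Labels as signs: `+1` for `H` and `-1` for `V`. -/
def sgn (b : Bool) : ℝ := if b then 1 else -1

/-- The label correction, accumulated move by move: `hvDiff` at the departure site times the change
of the label sign there. -/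
noncomputable def corr (n : ℕ) (hn : 0 < n) (ρ : Config) (y : Path) (t : ℕ) : ℝ :=
  ∑ s ∈ Finset.range t, hvDiff (site n hn ρ y s) *
    (sgn ((seq n hn ρ y (s + 1)).2 (site n hn ρ y s)) -
      sgn ((seq n hn ρ y s).2 (site n hn ρ y s)))

lemma seq_succ_label_of_ne (y : Path) (t : ℕ) (x : Z2) (hx : x ≠ site n hn ρ y t) :
    (seq n hn ρ y (t + 1)).2 x = (seq n hn ρ y t).2 x := by
  exact Function.update_of_ne hx _ _

/-- The increments of `corr` telescope at each site. -/
lemma corr_eq (y : Path) (W : Finset Z2) (t : ℕ) (hW : ∀ s < t, site n hn ρ y s ∈ W) :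
    corr n hn ρ y t = ∑ x ∈ W, hvDiff x * (sgn ((seq n hn ρ y t).2 x) - sgn (ρ x)) := by
  induction t with
  | zero => simp [corr, seq]
  | succ t ih =>
    have ih' := ih fun s hs => hW s (by omega)
    unfold corr at ih' ⊢
    rw [Finset.sum_range_succ, ih', eq_comm, ← sub_eq_iff_eq_add', ← Finset.sum_sub_distrib]
    rw [Finset.sum_eq_single_of_mem _ (hW t (by omega))]
    · ring
    · intro x _ hx
      rw [seq_succ_label_of_ne y t x hx]; ring

lemma abs_corr_le (y : Path) (t T : ℕ) (hT : 0 < T) (ht : t ≤ T) :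
    |corr n hn ρ y t| ≤ 4 * (Real.log T + 249) := by
  set W := (Finset.range t).image (site n hn ρ y) with hW
  have hc : W.card ≤ T := Finset.card_image_le.trans (by simpa using ht)
  rw [corr_eq y W t fun s hs => Finset.mem_image_of_mem _ (Finset.mem_range.2 hs)]
  refine (Finset.abs_sum_le_sum_abs _ _).trans ?_
  have : ∀ x ∈ W, |hvDiff x * (sgn ((seq n hn ρ y t).2 x) - sgn (ρ x))| ≤ 2 * |hvDiff x| := by
    intro x _
    rw [abs_mul, mul_comm]
    apply mul_le_mul_of_nonneg_right _ (abs_nonneg _)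
    unfold sgn
    split_ifs <;> norm_num
  refine (Finset.sum_le_sum this).trans ?_
  rw [← Finset.mul_sum]
  linarith [sum_abs_hvDiff_le W T hT hc]

/-- The process `∑ᵢ pot (Xᵢ) + (1 - 2q)/(2q) · corr`, which is a supermartingale as long as all
walkers stay away from the origin. -/
noncomputable def lyap (q : ℝ) (n : ℕ) (hn : 0 < n) (ρ : Config) (y : Path) (t : ℕ) : ℝ :=
  ∑ j, pot ((seq n hn ρ y t).1 j) + (1 - 2 * q) / (2 * q) * corr n hn ρ y t

/-- Bound for the label correction up to time `T`. -/
noncomputable def bnd (q : ℝ) (T : ℕ) : ℝ := |4 * q - 2| / q * (Real.log T + 249)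

lemma bnd_nonneg (hq : q ∈ Set.Ioc (0 : ℝ) 1) (T : ℕ) : 0 ≤ bnd q T := by
  have := hq.1
  have := Real.log_natCast_nonneg T
  unfold bnd
  positivity

lemma abs_mul_corr_le (hq : q ∈ Set.Ioc (0 : ℝ) 1) (y : Path) (t T : ℕ) (hT : 0 < T)
    (ht : t ≤ T) : |(1 - 2 * q) / (2 * q) * corr n hn ρ y t| ≤ bnd q T := by
  have hq0 := hq.1
  rw [abs_mul]
  have h := mul_le_mul_of_nonneg_left (abs_corr_le (n := n) (hn := hn) (ρ := ρ) y t T hT ht)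
    (abs_nonneg ((1 - 2 * q) / (2 * q)))
  refine h.trans (le_of_eq ?_)
  unfold bnd
  rw [abs_div, abs_of_pos (by linarith : 0 < 2 * q)]
  have : |4 * q - 2| = 2 * |1 - 2 * q| := by
    rw [abs_sub_comm, (by ring : 2 - 4 * q = 2 * (1 - 2 * q)), abs_mul, abs_two]
  rw [this]
  field_simp
  ring

lemma adapted_corr (t : ℕ) : Adapted t (fun y => corr n hn ρ y t) := by
  intro y y' h
  unfold corr
  refine Finset.sum_congr rfl fun s hs => ?_
  have hs := Finset.mem_range.1 hs
  have h1 : seq n hn ρ y s = seq n hn ρ y' s :=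
    (adapted_seq n hn ρ s).mono hs.le y y' h
  have h2 : seq n hn ρ y (s + 1) = seq n hn ρ y' (s + 1) :=
    (adapted_seq n hn ρ (s + 1)).mono hs y y' h
  simp only [site, h1, h2]

lemma adapted_lyap (t : ℕ) : Adapted t (fun y => lyap q n hn ρ y t) := by
  intro y y' h
  have h1 : seq n hn ρ y t = seq n hn ρ y' t := adapted_seq n hn ρ t y y' h
  have h2 : corr n hn ρ y t = corr n hn ρ y' t := adapted_corr t y y' h
  simp only [lyap, h1, h2]

/-- No walker is near the origin during `[u, t]`. -/
def Clear (n : ℕ) (hn : 0 < n) (ρ : Config) (u t : ℕ) (y : Path) : Prop :=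
  ∀ s, u ≤ s → s ≤ t → ∀ i, 9 ≤ nsq ((seq n hn ρ y s).1 i)

lemma adapted_clear (u t : ℕ) : Adapted t (Clear n hn ρ u t) := by
  intro y y' h
  have : ∀ s ≤ t, seq n hn ρ y s = seq n hn ρ y' s := fun s hs =>
    (adapted_seq n hn ρ s).mono hs y y' h
  unfold Clear
  apply propext
  refine forall_congr' fun s => forall_congr' fun _ => forall_congr' fun hs => ?_
  rw [this s hs]

lemma lyap_update (y : Path) (t : ℕ) (z : Z2) :
    lyap q n hn ρ (Function.update y t z) (t + 1) =
      lyap q n hn ρ y t - pot (site n hn ρ y t) + pot z +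
      (1 - 2 * q) / (2 * q) * (hvDiff (site n hn ρ y t) *
        (sgn (if z.2 = (site n hn ρ y t).2 then true else false) -
          sgn ((seq n hn ρ y t).2 (site n hn ρ y t)))) := by
  unfold lyap
  have h1 : corr n hn ρ (Function.update y t z) (t + 1) = corr n hn ρ y t +
      hvDiff (site n hn ρ y t) * (sgn (if z.2 = (site n hn ρ y t).2 then true else false) -
          sgn ((seq n hn ρ y t).2 (site n hn ρ y t))) := by
    have e1 : corr n hn ρ (Function.update y t z) (t + 1)
      = corr n hn ρ (Function.update y t z) t + hvDiff (site n hn ρ (Function.update y t z) t) *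
    (sgn ((seq n hn ρ (Function.update y t z) (t + 1)).2 (site n hn ρ (Function.update y t z) t)) -
      sgn ((seq n hn ρ (Function.update y t z) t).2 (site n hn ρ (Function.update y t z) t))) :=
      Finset.sum_range_succ _ _
    have e2 : corr n hn ρ (Function.update y t z) t = corr n hn ρ y t :=
      (adapted_corr t).update y z
    have e3 : site n hn ρ (Function.update y t z) t = site n hn ρ y t :=
      (adapted_site t).update y z
    rw [e1, e2, e3, seq_update_succ, seq_update_self]
    simp only [apply', site, Function.update_self]
    congr!
  rw [h1, seq_update_succ, sum_apply']
  unfold site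
  ring

lemma pot_sum_nonneg (s : State n) : 0 ≤ ∑ j, pot (s.1 j) :=
  Finset.sum_nonneg fun _ _ => pot_nonneg _

lemma pot_sum_le_lyap (hq : q ∈ Set.Ioc (0 : ℝ) 1) (y : Path) (t T : ℕ) (hT : 0 < T)
    (ht : t ≤ T) : ∑ j, pot ((seq n hn ρ y t).1 j) ≤ lyap q n hn ρ y t + bnd q T := by
  have := (abs_le.1 (abs_mul_corr_le (n := n) (hn := hn) (ρ := ρ) hq y t T hT ht)).1
  unfold lyap
  linarith

open Classical in
/-- The supermartingale killed at the first visit near the origin, shifted so as to be nonnegative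
up to time `T`. -/
noncomputable def killed (q : ℝ) (n : ℕ) (hn : 0 < n) (ρ : Config) (u T t : ℕ) (y : Path) :
    ℝ≥0∞ :=
  if Clear n hn ρ u t y then ENNReal.ofReal (lyap q n hn ρ y t + bnd q T) else 0

lemma adapted_killed (u T t : ℕ) : Adapted t (killed q n hn ρ u T t) := by
  intro y y' h
  have h1 : Clear n hn ρ u t y = Clear n hn ρ u t y' := adapted_clear u t y y' h
  have h2 : lyap q n hn ρ y t = lyap q n hn ρ y' t := adapted_lyap t y y' h
  unfold killed
  rw [h2]
  by_cases hc : Clear n hn ρ u t y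
  · rw [if_pos hc, if_pos (h1 ▸ hc)]
  · rw [if_neg hc, if_neg (h1 ▸ hc)]

/-- At a site far from the origin, the factor `(1 - 2q)/(2q)` makes the relaxation of the label
compensate the bias of the next step caused by the current label; what remains is the Laplacian of
`pot`, which is nonpositive. -/
lemma lintegral_killed_succ (hq : q ∈ Set.Ioc (0 : ℝ) 1) (hμ : IsLaw q n hn ρ μ)
    (u T t : ℕ) (hu : u ≤ t) (ht : t + 1 ≤ T) :
    ∫⁻ y, killed q n hn ρ u T (t + 1) y ∂μ ≤ ∫⁻ y, killed q n hn ρ u T t y ∂μ := by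
  rw [lintegral_step hμ t _ (adapted_killed u T (t + 1))]
  refine lintegral_mono fun y => ?_
  by_cases hc : Clear n hn ρ u t y
  · have hR : killed q n hn ρ u T t y = ENNReal.ofReal (lyap q n hn ρ y t + bnd q T) := if_pos hc
    rw [hR]
    set x := site n hn ρ y t with hx
    set ψ : Z2 → ℝ := fun z => lyap q n hn ρ (Function.update y t z) (t + 1) + bnd q T with hψ
    have hψ0 : ∀ z, 0 ≤ ψ z := fun z =>
      (pot_sum_nonneg _).trans (pot_sum_le_lyap hq _ (t + 1) T (by omega) ht)
    have h1 : ∀ z, killed q n hn ρ u T (t + 1) (Function.update y t z) ≤ ENNReal.ofReal (ψ z) := by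
      intro z
      unfold killed
      split_ifs
      · exact le_rfl
      · exact zero_le
    refine (ENNReal.tsum_le_tsum fun z => mul_le_mul_right (h1 z) _).trans ?_
    rw [tsum_weight_ofReal hq _ _ _ (hψ0 _) (hψ0 _) (hψ0 _) (hψ0 _)]
    apply ENNReal.ofReal_le_ofReal
    have hxe : (seq n hn ρ y t).1 (active n hn t) = x := rfl
    rw [hxe]
    have hfar : 9 ≤ nsq x := hc t hu le_rfl _
    have hsup := pot_superharmonic x hfar
    have hD : hvDiff x = (pot (x + (1, 0)) + pot (x - (1, 0)) - pot (x + (0, 1))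
      - pot (x - (0, 1))) / 4 := if_pos hfar
    have hq0 : q ≠ 0 := hq.1.ne'
    simp only [hψ, lyap_update, ← hx, hD]
    generalize lyap q n hn ρ y t = L at *
    generalize (seq n hn ρ y t).2 x = b at *
    generalize pot (x + (1, 0)) = p1 at *
    generalize pot (x - (1, 0)) = p2 at *
    generalize pot (x + (0, 1)) = p3 at *
    generalize pot (x - (0, 1)) = p4 at *
    have t1 : (x + ((1, 0) : Z2)).2 = x.2 := by simp
    have t2 : (x - ((1, 0) : Z2)).2 = x.2 := by simp
    have t3 : ¬ (x + ((0, 1) : Z2)).2 = x.2 := by simp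
    have t4 : ¬ (x - ((0, 1) : Z2)).2 = x.2 := by simp
    rw [if_pos t1, if_pos t2, if_neg t3, if_neg t4]
    -- After relabelling, the sign at `x` changes by `∓ 2` with probability `q`.
    have key : ∀ a : ℝ, (1 - 2 * q) / (2 * q) * a * q = (1 - 2 * q) / 2 * a := by
      intro a; field_simp
    have k := key ((p1 + p2 - p3 - p4) / 4)
    generalize (1 - 2 * q) / (2 * q) = κ at *
    cases b <;> simp [sgn]
    · nlinarith
    · nlinarith
  · have : ∀ z, killed q n hn ρ u T (t + 1) (Function.update y t z) = 0 := by
      intro z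
      unfold killed
      rw [if_neg]
      intro h
      apply hc
      rw [← (adapted_clear u t).update y z]
      exact fun s h1 h2 => h s h1 (by omega)
    simp [this]

lemma lintegral_killed_le (hq : q ∈ Set.Ioc (0 : ℝ) 1) (hμ : IsLaw q n hn ρ μ)
    (u v T t : ℕ) (hu : u ≤ v) (hv : v ≤ t) (ht : t ≤ T) :
    ∫⁻ y, killed q n hn ρ u T t y ∂μ ≤ ∫⁻ y, killed q n hn ρ u T v y ∂μ := by
  induction t, hv using Nat.le_induction with
  | base => exact le_rfl
  | succ t hvt ih =>
    exact (lintegral_killed_succ hq hμ u T t (by omega) ht).trans (ih (by omega))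

lemma measurableSet_clear (u t : ℕ) : MeasurableSet {y | Clear n hn ρ u t y} := by
  have : Measurable (Clear n hn ρ u t) := (adapted_clear u t).measurable
  exact measurableSet_setOfPred.2 this

lemma lintegral_killed_start [IsProbabilityMeasure μ] (hq : q ∈ Set.Ioc (0 : ℝ) 1)
    (hμ : IsLaw q n hn ρ μ) (u v T : ℕ) (hv : 0 < v) :
    ∫⁻ y, killed q n hn ρ u T v y ∂μ ≤
      v + ENNReal.ofReal (bnd q v) + ENNReal.ofReal (bnd q T) * μ {y | Clear n hn ρ u v y} := by
  have hpt : ∀ y, killed q n hn ρ u T v y ≤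
      (ENNReal.ofReal (∑ j, nsq ((seq n hn ρ y v).1 j)) + ENNReal.ofReal (bnd q v)) +
      {y | Clear n hn ρ u v y}.indicator (fun _ => ENNReal.ofReal (bnd q T)) y := by
    intro y
    unfold killed
    split_ifs with hc
    · rw [Set.indicator_of_mem (by exact hc),
        ← ENNReal.ofReal_add (Finset.sum_nonneg fun _ _ => nsq_nonneg _) (bnd_nonneg hq v),
        ← ENNReal.ofReal_add (add_nonneg (Finset.sum_nonneg fun _ _ => nsq_nonneg _)
          (bnd_nonneg hq v)) (bnd_nonneg hq T)]
      apply ENNReal.ofReal_le_ofReal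
      have h1 := (abs_le.1 (abs_mul_corr_le (n := n) (hn := hn) (ρ := ρ) hq y v v hv le_rfl)).2
      have h2 : ∑ j, pot ((seq n hn ρ y v).1 j) ≤ ∑ j, nsq ((seq n hn ρ y v).1 j) :=
        Finset.sum_le_sum fun _ _ => pot_le _
      unfold lyap
      linarith
    · exact zero_le
  refine (lintegral_mono hpt).trans ?_
  rw [lintegral_add_right _ (measurable_const.indicator (measurableSet_clear u v)),
    lintegral_add_right _ measurable_const, lintegral_nsq hq hμ,
    lintegral_indicator_const (measurableSet_clear u v)]
  simp

end

end HV

/-! ### Escape has probability zero -/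

namespace HV

section
variable {q : ℝ} {n : ℕ} {hn : 0 < n} {ρ : Config} {μ : Measure Path}

/-- During a round of the turn order, each walker waits at its place until it is activated. -/
lemma site_block (y : Path) (k : ℕ) (i : Fin n) :
    site n hn ρ y (k * n + i) = (seq n hn ρ y (k * n)).1 i := by
  have h : ∀ j ≤ i.val, (seq n hn ρ y (k * n + j)).1 i = (seq n hn ρ y (k * n)).1 i := by
    intro j
    induction j with
    | zero => intro _; rfl
    | succ j ih =>
      intro hj
      rw [← ih (by omega), ← add_assoc, seq_succ]
      refine Function.update_of_ne ?_ _ _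
      intro h
      have h2 := congrArg Fin.val h
      simp only [active] at h2
      rw [mul_comm k n, Nat.mul_add_mod, Nat.mod_eq_of_lt (by omega)] at h2
      omega
  rw [← h i le_rfl]
  unfold site
  have : active n hn (k * n + i) = i := by
    apply Fin.ext
    simp only [active]
    rw [mul_comm k n, Nat.mul_add_mod, Nat.mod_eq_of_lt i.2]
  rw [this]

lemma sum_box_block (r K : ℕ) :
    ∑ k ∈ Finset.range K, ∑ i, μ {y | InBox r ((seq n hn ρ y (k * n)).1 i)} =
      ∑ t ∈ Finset.range (K * n), μ {y | InBox r (site n hn ρ y t)} := by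
  induction K with
  | zero => simp
  | succ K ih =>
    rw [Finset.sum_range_succ, ih, Nat.succ_mul, Finset.sum_range_add, Finset.sum_range (n := n)]
    simp_rw [site_block]

/-- The event that no walker comes near the origin after time `u`. -/
def Esc (n : ℕ) (hn : 0 < n) (ρ : Config) (u : ℕ) : Set Path := {y | ∀ t, Clear n hn ρ u t y}

lemma measurableSet_esc (u : ℕ) : MeasurableSet (Esc n hn ρ u) := by
  have : Esc n hn ρ u = ⋂ t, {y | Clear n hn ρ u t y} := by
    ext y; simp [Esc]
  rw [this]
  exact MeasurableSet.iInter fun t => measurableSet_clear u t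

lemma log_le_pot (r : ℕ) (hr : 0 < r) (p : Z2) (hp : ¬ InBox r p) : 2 * Real.log r ≤ pot p := by
  have hr' : (1 : ℝ) ≤ r := by exact_mod_cast hr
  have key : ∀ a : ℤ, ¬ |a| ≤ (r : ℤ) → (r : ℝ) ^ 2 + 1 ≤ (a : ℝ) ^ 2 := by
    intro a ha
    have h1 : (r : ℤ) + 1 ≤ |a| := by omega
    have h2 : (r : ℝ) + 1 ≤ |(a : ℝ)| := by exact_mod_cast h1
    rw [← sq_abs (a : ℝ)]
    nlinarith
  have h : (r : ℝ) ^ 2 ≤ nsq p - 1 := by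
    unfold nsq
    unfold InBox at hp
    rw [not_and_or] at hp
    rcases hp with h | h
    · have := key _ h
      nlinarith [sq_nonneg (p.2 : ℝ)]
    · have := key _ h
      nlinarith [sq_nonneg (p.1 : ℝ)]
  unfold pot
  have : 2 * Real.log r = Real.log ((r : ℝ) ^ 2) := by rw [Real.log_pow]; norm_num
  rw [this]
  exact Real.log_le_log (by positivity) h

lemma measurableSet_inBox (r t : ℕ) (i : Fin n) :
    MeasurableSet {y | InBox r ((seq n hn ρ y t).1 i)} := by
  have : Measurable (fun y => (seq n hn ρ y t).1 i) := by
    apply Adapted.measurable (t := t)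
    intro y y' h
    have hst : seq n hn ρ y t = seq n hn ρ y' t := adapted_seq n hn ρ t y y' h
    simp only [hst]
  exact this (Set.to_countable {p | InBox r p}).measurableSet

/-- On the escape event each walker outside the box of half-side `r` contributes at least `2 log r`
to the supermartingale. -/
lemma esc_le [IsProbabilityMeasure μ] (hq : q ∈ Set.Ioc (0 : ℝ) 1)
    (hμ : IsLaw q n hn ρ μ) (u v t T r : ℕ) (hu : u ≤ v) (hv0 : 0 < v) (hv : v ≤ t) (ht : t ≤ T)
    (hr : 0 < r) :
    2 * Real.log r * (n * μ.real (Esc n hn ρ u)) ≤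
      v + bnd q v + bnd q T * μ.real {y | Clear n hn ρ u v y} +
        2 * Real.log r * ∑ i, μ.real {y | InBox r ((seq n hn ρ y t).1 i)} := by
  set l := 2 * Real.log r with hl
  have hl0 : 0 ≤ l := by
    have := Real.log_natCast_nonneg r
    positivity
  have hb1 := bnd_nonneg hq v
  have hb2 := bnd_nonneg hq T
  have hpt : ∀ y, (Esc n hn ρ u).indicator (fun _ => ENNReal.ofReal (n * l)) y ≤
      killed q n hn ρ u T t y +
        ∑ i, {y | InBox r ((seq n hn ρ y t).1 i)}.indicator (fun _ => ENNReal.ofReal l) y := by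
    intro y
    by_cases hy : y ∈ Esc n hn ρ u
    · rw [Set.indicator_of_mem hy]
      have h1 : ENNReal.ofReal (n * l) = ∑ _i : Fin n, ENNReal.ofReal l := by
        rw [Finset.sum_const, Finset.card_univ, Fintype.card_fin, nsmul_eq_mul,
          ENNReal.ofReal_mul (by positivity), ENNReal.ofReal_natCast]
      have h2 : ∑ i, ENNReal.ofReal (pot ((seq n hn ρ y t).1 i)) ≤ killed q n hn ρ u T t y := by
        unfold killed
        rw [if_pos (hy t), ← ENNReal.ofReal_sum_of_nonneg fun _ _ => pot_nonneg _]
        exact ENNReal.ofReal_le_ofReal (pot_sum_le_lyap hq y t T (by omega) ht)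
      rw [h1]
      refine le_trans ?_ (add_le_add_left h2 _)
      rw [← Finset.sum_add_distrib]
      refine Finset.sum_le_sum fun i _ => ?_
      by_cases hb : InBox r ((seq n hn ρ y t).1 i)
      · rw [Set.indicator_of_mem (by exact hb)]
        exact le_add_self
      · exact (ENNReal.ofReal_le_ofReal (log_le_pot r hr _ hb)).trans le_self_add
    · rw [Set.indicator_of_notMem hy]
      exact zero_le
  have h := lintegral_mono (μ := μ) hpt
  have hms : Measurable (killed q n hn ρ u T t) := (adapted_killed u T t).measurable
  rw [lintegral_indicator_const (measurableSet_esc u), lintegral_add_left hms,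
    lintegral_finsetSum _ fun i _ => measurable_const.indicator (measurableSet_inBox r t i)] at h
  simp_rw [lintegral_indicator_const (measurableSet_inBox r t _)] at h
  have h' := h.trans (add_le_add_left
    ((lintegral_killed_le hq hμ u v T t hu hv ht).trans
      (lintegral_killed_start hq hμ u v T hv0)) _)
  rw [← Finset.mul_sum] at h'
  simp only [fun S => (ofReal_measureReal (μ := μ) (s := S)).symm] at h'
  rw [← ENNReal.ofReal_sum_of_nonneg fun _ _ => measureReal_nonneg, ← ENNReal.ofReal_natCast v,
    ← ENNReal.ofReal_mul hb2, ← ENNReal.ofReal_mul hl0, ← ENNReal.ofReal_mul (by positivity),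
    ← ENNReal.ofReal_add (by positivity) hb1, ← ENNReal.ofReal_add (by positivity) (by positivity),
    ← ENNReal.ofReal_add (by positivity) (by positivity),
    ENNReal.ofReal_le_ofReal_iff (by positivity)] at h'
  linarith

/-- Summation of `esc_le` over the rounds `k₀ ≤ k < A² r²`, with the occupation bound. -/
lemma esc_sum_le [IsProbabilityMeasure μ] (hq : q ∈ Set.Ioc (0 : ℝ) 1)
    (hμ : IsLaw q n hn ρ μ) (u k₀ A r : ℕ) (hu : u ≤ k₀ * n) (hk : 0 < k₀) (hA : 0 < A)
    (hr : 0 < r) (hK : k₀ ≤ A ^ 2 * r ^ 2) :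
    ((A : ℝ) ^ 2 * r ^ 2 - k₀) * (2 * Real.log r * (n * μ.real (Esc n hn ρ u)) -
      ((k₀ * n : ℕ) + bnd q (k₀ * n) + bnd q (A ^ 2 * r ^ 2 * n) *
        μ.real {y | Clear n hn ρ u (k₀ * n) y})) ≤
      2 * Real.log r * (15 * n * A * r ^ 2) := by
  set K := A ^ 2 * r ^ 2 with hKd
  have hlog := Real.log_natCast_nonneg r
  have hr1 : (1 : ℝ) ≤ r := by exact_mod_cast hr
  have hA1 : (1 : ℝ) ≤ A := by exact_mod_cast hA
  have hbox : ∑ k ∈ Finset.range K, ∑ i, μ.real {y | InBox r ((seq n hn ρ y (k * n)).1 i)} ≤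
      15 * n * A * r ^ 2 := by
    have h := sum_box_block (n := n) (hn := hn) (ρ := ρ) (μ := μ) r K
    -- `N = A r` is the square root of the number `K` of rounds.
    have h2 := sum_box_le hq hμ r (K * n) (A * r) (by positivity)
    rw [← h] at h2
    simp only [fun S => (ofReal_measureReal (μ := μ) (s := S)).symm] at h2
    simp_rw [← ENNReal.ofReal_sum_of_nonneg
      fun (i : Fin n) (_ : i ∈ Finset.univ) => measureReal_nonneg (μ := μ)] at h2
    rw [← ENNReal.ofReal_sum_of_nonneg
      fun _ _ => Finset.sum_nonneg fun _ _ => measureReal_nonneg,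
      ENNReal.ofReal_le_ofReal_iff (by positivity)] at h2
    refine h2.trans ?_
    have e : (((K * n : ℕ) : ℝ)) / (A * r) = n * (A * r) := by
      rw [hKd]; push_cast; field_simp
    rw [e]
    have hn0 : (0 : ℝ) ≤ n := by positivity
    have h1 : (2 * (r : ℝ) + 1) ≤ 3 * r := by linarith
    have h3 : (n : ℝ) * (2 * r + 2 * (A * r)) + n * (A * r) ≤ n * (5 * (A * r)) := by
      have : (r : ℝ) ≤ A * r := by nlinarith
      nlinarith
    calc _ ≤ (3 * (r : ℝ)) * (n * (5 * (A * r))) := by gcongr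
      _ = _ := by ring
  have hsum : ∑ k ∈ Finset.Ico k₀ K, (2 * Real.log r * (n * μ.real (Esc n hn ρ u)) -
      ((k₀ * n : ℕ) + bnd q (k₀ * n) + bnd q (K * n) *
        μ.real {y | Clear n hn ρ u (k₀ * n) y})) ≤
      ∑ k ∈ Finset.Ico k₀ K,
        2 * Real.log r * ∑ i, μ.real {y | InBox r ((seq n hn ρ y (k * n)).1 i)} := by
    refine Finset.sum_le_sum fun k hkm => ?_
    obtain ⟨h1, h2⟩ := Finset.mem_Ico.1 hkm
    have := esc_le hq hμ u (k₀ * n) (k * n) (K * n) r hu (by positivity)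
      (Nat.mul_le_mul_right _ h1) (Nat.mul_le_mul_right _ h2.le) hr
    linarith
  rw [Finset.sum_const, Nat.card_Ico, nsmul_eq_mul, Nat.cast_sub hK, ← Finset.mul_sum] at hsum
  have hcast : (K : ℝ) = (A : ℝ) ^ 2 * r ^ 2 := by rw [hKd]; push_cast; rfl
  rw [← hcast]
  refine hsum.trans ?_
  gcongr
  refine le_trans ?_ hbox
  refine Finset.sum_le_sum_of_subset_of_nonneg ?_ fun _ _ _ =>
    Finset.sum_nonneg fun _ _ => measureReal_nonneg
  intro k hkm
  exact Finset.mem_range.2 (Finset.mem_Ico.1 hkm).2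

/-- After division by `2 A² r² log r`, the limits `r → ∞` and then `A → ∞` in `esc_sum_le` keep only
the growth rates `2 log r` of the potential of one walker and `|4q - 2|/q · 2 log r` of the label
correction. -/
lemma mul_esc_le [IsProbabilityMeasure μ] (hq : q ∈ Set.Ioc (0 : ℝ) 1)
    (hμ : IsLaw q n hn ρ μ) (u k₀ : ℕ) (hu : u ≤ k₀ * n) (hk : 0 < k₀) :
    n * μ.real (Esc n hn ρ u) ≤
      |4 * q - 2| / q * μ.real {y | Clear n hn ρ u (k₀ * n) y} := by
  set P := μ.real (Esc n hn ρ u)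
  set G := μ.real {y | Clear n hn ρ u (k₀ * n) y}
  have hA : ∀ A : ℕ, 0 < A → n * P - |4 * q - 2| / q * G ≤ 15 * n / A := by
    intro A hA
    set L : ℕ → ℝ := fun r => 2 * Real.log r with hL
    have hLt : Tendsto L atTop atTop :=
      (Real.tendsto_log_atTop.comp tendsto_natCast_atTop_atTop).const_mul_atTop two_pos
    have hinv : ∀ c : ℝ, Tendsto (fun r => c / L r) atTop (nhds 0) := fun c =>
      hLt.const_div_atTop c
    have hKt : Tendsto (fun r : ℕ => (A : ℝ) ^ 2 * (r : ℝ) ^ 2) atTop atTop := by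
      apply Tendsto.const_mul_atTop (by positivity)
      exact (tendsto_pow_atTop two_ne_zero).comp tendsto_natCast_atTop_atTop
    set c : ℝ := (k₀ * n : ℕ) + bnd q (k₀ * n)
    set d : ℝ := Real.log ((A : ℝ) ^ 2 * n) + 249
    have hlim : Tendsto (fun r : ℕ => (1 - k₀ / ((A : ℝ) ^ 2 * (r : ℝ) ^ 2)) *
        (n * P - c / L r - |4 * q - 2| / q * G * (d / L r + 1))) atTop
        (nhds ((1 - 0) * (n * P - 0 - |4 * q - 2| / q * G * (0 + 1)))) :=
      (tendsto_const_nhds.sub (hKt.const_div_atTop _)).mul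
        ((tendsto_const_nhds.sub (hinv c)).sub (((hinv d).add_const 1).const_mul _))
    have hle : (1 - 0) * (n * P - 0 - |4 * q - 2| / q * G * (0 + 1)) ≤ 15 * n / A := by
      refine le_of_tendsto hlim ?_
      filter_upwards [hLt.eventually_gt_atTop 0, hKt.eventually_ge_atTop k₀, eventually_gt_atTop 0]
        with r h1 h2 h3
      have h := esc_sum_le hq hμ u k₀ A r hu hk hA h3 (by exact_mod_cast h2)
      have hA0 : (0 : ℝ) < A := by exact_mod_cast hA
      have hr0 : (0 : ℝ) < r := by exact_mod_cast h3
      have hn0 : (0 : ℝ) < n := by exact_mod_cast hn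
      have hb : bnd q (A ^ 2 * r ^ 2 * n) = |4 * q - 2| / q * (d + L r) := by
        unfold bnd
        congr 1
        have : (((A ^ 2 * r ^ 2 * n : ℕ)) : ℝ) = ((A : ℝ) ^ 2 * n) * (r : ℝ) ^ 2 := by
          push_cast; ring
        rw [this, Real.log_mul (by positivity) (by positivity), Real.log_pow]
        simp only [hL, d]
        push_cast
        ring
      rw [hb] at h
      change _ * (L r * _ - _) ≤ L r * _ at h
      have e : (1 - k₀ / ((A : ℝ) ^ 2 * (r : ℝ) ^ 2)) *
          (n * P - c / L r - |4 * q - 2| / q * G * (d / L r + 1)) =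
          ((A : ℝ) ^ 2 * r ^ 2 - k₀) * (L r * (n * P) - (c + |4 * q - 2| / q * (d + L r) * G)) /
            (L r * ((A : ℝ) ^ 2 * r ^ 2)) := by
        generalize |4 * q - 2| / q = α
        have := h1.ne'
        field_simp
        ring
      rw [e, div_le_div_iff₀ (by positivity) hA0]
      refine (mul_le_mul_of_nonneg_right h hA0.le).trans (le_of_eq ?_)
      ring
    linarith
  have h0 : Tendsto (fun A : ℕ => 15 * (n : ℝ) / A) atTop (nhds 0) :=
    tendsto_const_div_atTop_nhds_zero_nat _
  have := ge_of_tendsto h0 ((eventually_gt_atTop 0).mono hA)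
  linarith

/-- The events `Clear u (k n)` decrease to `Esc u`, so `mul_esc_le` becomes `n P ≤ α P` with
`α < n`. -/
lemma esc_null [IsProbabilityMeasure μ] (hq : q ∈ Set.Ioc (0 : ℝ) 1)
    (hn' : |4 * q - 2| / q < n) (hμ : IsLaw q n hn ρ μ) (u : ℕ) :
    μ (Esc n hn ρ u) = 0 := by
  have hE : Esc n hn ρ u = ⋂ k, {y | Clear n hn ρ u (k * n) y} := by
    ext y
    simp only [Esc, Set.mem_ofPred_eq, Set.mem_iInter]
    refine ⟨fun h k => h _, fun h t s h1 h2 i => h t s h1 ?_ i⟩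
    exact h2.trans (Nat.le_mul_of_pos_right _ hn)
  have hanti : Antitone fun k => {y | Clear n hn ρ u (k * n) y} := by
    intro k k' hk y hy s h1 h2 i
    exact hy s h1 (h2.trans (Nat.mul_le_mul_right _ hk)) i
  have hlim := tendsto_measure_iInter_atTop (μ := μ)
    (fun k => (measurableSet_clear (hn := hn) (ρ := ρ) u (k * n)).nullMeasurableSet) hanti
    ⟨0, measure_ne_top _ _⟩
  rw [← hE] at hlim
  have hlim' := (ENNReal.tendsto_toReal (measure_ne_top μ (Esc n hn ρ u))).comp hlim
  have hle : n * μ.real (Esc n hn ρ u) ≤ |4 * q - 2| / q * μ.real (Esc n hn ρ u) := by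
    refine ge_of_tendsto (hlim'.const_mul _) ?_
    filter_upwards [eventually_gt_atTop 0, eventually_ge_atTop u] with k h1 h2
    exact mul_esc_le hq hμ u k (h2.trans (Nat.le_mul_of_pos_right _ hn)) h1
  have h0 : μ.real (Esc n hn ρ u) = 0 := by
    have := measureReal_nonneg (μ := μ) (s := Esc n hn ρ u)
    nlinarith
  exact (measureReal_eq_zero_iff).1 h0

end

end HV

/-! ### Propagation of recurrence -/

namespace HV

section
variable {q : ℝ} {n : ℕ} {hn : 0 < n} {ρ : Config} {μ : Measure Path}

/-- The move at time `t` leads from `x` to `z`. -/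
def Hit (n : ℕ) (hn : 0 < n) (ρ : Config) (x z : Z2) (t : ℕ) (y : Path) : Prop :=
  site n hn ρ y t = x ∧ y t = z

/-- No move during `[u, t)` leads from `x` to `z`. -/
def NoHit (n : ℕ) (hn : 0 < n) (ρ : Config) (x z : Z2) (u t : ℕ) (y : Path) : Prop :=
  ∀ s, u ≤ s → s < t → ¬ Hit n hn ρ x z s y

/-- The number of departures from `x` during `[u, t)`. -/
def count (n : ℕ) (hn : 0 < n) (ρ : Config) (x : Z2) (u t : ℕ) (y : Path) : ℕ :=
  ((Finset.Ico u t).filter fun s => site n hn ρ y s = x).card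

/-- Weight of the label `b` at `x`: the label that favours the move from `x` to `z` weighs more. -/
noncomputable def labelWeight (x z : Z2) (b : Bool) : ℝ :=
  if b = decide (z.2 = x.2) then 1 else 3 / 4

open Classical in
/-- A supermartingale which grows geometrically with the number of departures from `x`, as long as
none of these leads to `z`. -/
noncomputable def avoid (q : ℝ) (n : ℕ) (hn : 0 < n) (ρ : Config) (x z : Z2) (u t : ℕ)
    (y : Path) : ℝ :=
  if NoHit n hn ρ x z u t y then
    labelWeight x z ((seq n hn ρ y t).2 x) * (1 / (1 - q / 4)) ^ count n hn ρ x u t y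
  else 0

lemma labelWeight_bounds (x z : Z2) (b : Bool) :
    3 / 4 ≤ labelWeight x z b ∧ labelWeight x z b ≤ 1 := by
  unfold labelWeight
  split_ifs <;> norm_num

lemma adapted_noHit (x z : Z2) (u t : ℕ) : Adapted t (NoHit n hn ρ x z u t) := by
  intro y y' h
  unfold NoHit Hit
  apply propext
  refine forall_congr' fun s => forall_congr' fun _ => forall_congr' fun hs => ?_
  have : site n hn ρ y s = site n hn ρ y' s := (adapted_site s).mono hs.le y y' h
  rw [this, h s hs]

lemma adapted_count (x : Z2) (u t : ℕ) : Adapted t (count n hn ρ x u t) := by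
  intro y y' h
  unfold count
  congr 1
  refine Finset.filter_congr fun s hs => ?_
  have : site n hn ρ y s = site n hn ρ y' s :=
    (adapted_site s).mono (Finset.mem_Ico.1 hs).2.le y y' h
  rw [this]

lemma adapted_avoid (x z : Z2) (u t : ℕ) : Adapted t (avoid q n hn ρ x z u t) := by
  intro y y' h
  have h1 := adapted_noHit (n := n) (hn := hn) (ρ := ρ) x z u t y y' h
  have h2 := adapted_count (n := n) (hn := hn) (ρ := ρ) x u t y y' h
  have h3 : seq n hn ρ y t = seq n hn ρ y' t := adapted_seq n hn ρ t y y' h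
  unfold avoid
  rw [h2, h3]
  by_cases hc : NoHit n hn ρ x z u t y
  · rw [if_pos hc, if_pos (h1 ▸ hc)]
  · rw [if_neg hc, if_neg (h1 ▸ hc)]

lemma noHit_succ (x z : Z2) (u t : ℕ) (hu : u ≤ t) (y : Path) :
    NoHit n hn ρ x z u (t + 1) y ↔ NoHit n hn ρ x z u t y ∧ ¬ Hit n hn ρ x z t y := by
  constructor
  · exact fun h => ⟨fun s h1 h2 => h s h1 (by omega), h t hu (by omega)⟩
  · rintro ⟨h1, h2⟩ s hs hs'
    rcases Nat.lt_succ_iff_lt_or_eq.1 hs' with h | rfl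
    · exact h1 s hs h
    · exact h2

lemma count_succ (x : Z2) (u t : ℕ) (hu : u ≤ t) (y : Path) :
    count n hn ρ x u (t + 1) y =
      count n hn ρ x u t y + if site n hn ρ y t = x then 1 else 0 := by
  unfold count
  rw [Finset.card_filter, Finset.card_filter, Finset.sum_Ico_succ_top hu]

/-- At a departure from `x`, the average over the possible moves of the new label weight, where the
move to `z` counts as `0`, is at most `1 - q/4` times the old label weight. If the old label favours
`z`, it is kept with probability `1 - q` and half of the mass is lost, and otherwise the weight drops to
`3/4`; if it does not favour `z`, it changes with probability `q` and then half of the mass is lost. -/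
lemma lintegral_avoid_succ [IsProbabilityMeasure μ] (hq : q ∈ Set.Ioc (0 : ℝ) 1)
    (hμ : IsLaw q n hn ρ μ) (x z : Z2)
    (hz : z = x + (1, 0) ∨ z = x - (1, 0) ∨ z = x + (0, 1) ∨ z = x - (0, 1))
    (u t : ℕ) (hu : u ≤ t) :
    ∫⁻ y, ENNReal.ofReal (avoid q n hn ρ x z u (t + 1) y) ∂μ ≤
      ∫⁻ y, ENNReal.ofReal (avoid q n hn ρ x z u t y) ∂μ := by
  have hq0 := hq.1
  have hq1 := hq.2
  have hl : 0 < 1 - q / 4 := by linarith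
  have hnn : ∀ t y, 0 ≤ avoid q n hn ρ x z u t y := by
    intro t y
    unfold avoid
    have := (labelWeight_bounds x z ((seq n hn ρ y t).2 x)).1
    split_ifs
    · positivity
    · exact le_rfl
  rw [lintegral_step hμ t]
  swap
  · intro y y' h
    simp only [adapted_avoid (q := q) (n := n) (hn := hn) (ρ := ρ) x z u (t + 1) y y' h]
  refine lintegral_mono fun y => ?_
  rw [tsum_weight_ofReal hq (ψ := fun w => avoid q n hn ρ x z u (t + 1) (Function.update y t w))
    _ _ (hnn _ _) (hnn _ _) (hnn _ _) (hnn _ _)]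
  apply ENNReal.ofReal_le_ofReal
  have hsite : ∀ w, site n hn ρ (Function.update y t w) t = site n hn ρ y t :=
    fun w => (adapted_site t).update y w
  by_cases hc : NoHit n hn ρ x z u t y
  swap
  · have : ∀ w, avoid q n hn ρ x z u (t + 1) (Function.update y t w) = 0 := by
      intro w
      unfold avoid
      rw [if_neg]
      rw [noHit_succ _ _ _ _ hu, (adapted_noHit x z u t).update]
      exact fun h => hc h.1
    simp only [this]
    simpa using hnn t y
  have hR : avoid q n hn ρ x z u t y =
      labelWeight x z ((seq n hn ρ y t).2 x) * (1 / (1 - q / 4)) ^ count n hn ρ x u t y :=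
    if_pos hc
  by_cases hx : site n hn ρ y t = x
  swap
  · have : ∀ w, avoid q n hn ρ x z u (t + 1) (Function.update y t w) =
        avoid q n hn ρ x z u t y := by
      intro w
      rw [hR]
      unfold avoid
      rw [if_pos, count_succ _ _ _ hu, hsite, if_neg hx, add_zero, (adapted_count x u t).update,
        seq_succ_label_of_ne _ _ _ (by rw [hsite]; exact fun h => hx h.symm), seq_update_self]
      rw [noHit_succ _ _ _ _ hu, (adapted_noHit x z u t).update]
      refine ⟨hc, fun h => hx ?_⟩
      rw [← hsite w]
      exact h.1
    simp only [this]
    apply le_of_eq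
    split_ifs <;> ring
  have hx' : (seq n hn ρ y t).1 (active n hn t) = x := hx
  have hval : ∀ w, avoid q n hn ρ x z u (t + 1) (Function.update y t w) =
      if w = z then 0 else labelWeight x z (decide (w.2 = x.2)) *
        (1 / (1 - q / 4)) ^ (count n hn ρ x u t y + 1) := by
    intro w
    unfold avoid
    have hit : Hit n hn ρ x z t (Function.update y t w) ↔ w = z := by
      unfold Hit
      rw [hsite, Function.update_self]
      simp [hx]
    rw [count_succ _ _ _ hu, hsite, if_pos hx, (adapted_count x u t).update]
    by_cases hw : w = z
    · rw [if_pos hw, if_neg]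
      rw [noHit_succ _ _ _ _ hu, hit]
      exact fun h => h.2 hw
    · rw [if_neg hw, if_pos]
      · congr 2
        rw [seq_update_succ]
        simp [apply', hx']
      · rw [noHit_succ _ _ _ _ hu, hit, (adapted_noHit x z u t).update]
        exact ⟨hc, hw⟩
  rw [hR, hx']
  simp only [hval]
  have hpow : (1 / (1 - q / 4)) ^ count n hn ρ x u t y =
      (1 - q / 4) * (1 / (1 - q / 4)) ^ (count n hn ρ x u t y + 1) := by
    rw [pow_succ, mul_left_comm, mul_one_div_cancel hl.ne', mul_one]
  rw [hpow]
  have hpos : 0 < (1 / (1 - q / 4)) ^ (count n hn ρ x u t y + 1) := by positivity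
  generalize (1 / (1 - q / 4)) ^ (count n hn ρ x u t y + 1) = Λ at hpos ⊢
  suffices ∃ a b : ℝ, (if (seq n hn ρ y t).2 x then 1 - q else q) / 2 * a +
      (if (seq n hn ρ y t).2 x then q else 1 - q) / 2 * b ≤
        labelWeight x z ((seq n hn ρ y t).2 x) * (1 - q / 4) ∧
      (if x + (1, 0) = z then 0 else labelWeight x z (decide ((x + (1, 0)).2 = x.2)) * Λ) +
      (if x - (1, 0) = z then 0 else labelWeight x z (decide ((x - (1, 0)).2 = x.2)) * Λ) = a * Λ ∧
      (if x + (0, 1) = z then 0 else labelWeight x z (decide ((x + (0, 1)).2 = x.2)) * Λ) +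
      (if x - (0, 1) = z then 0 else labelWeight x z (decide ((x - (0, 1)).2 = x.2)) * Λ) =
        b * Λ by
    obtain ⟨a, b, h, ha, hb⟩ := this
    rw [ha, hb]
    have := mul_le_mul_of_nonneg_right h hpos.le
    linarith
  generalize (seq n hn ρ y t).2 x = l
  have hxx : x + (1, 0) ≠ x - (1, 0) ∧ x + (0, 1) ≠ x - (0, 1) ∧ x + (1, 0) ≠ x + (0, 1) ∧
      x + (1, 0) ≠ x - (0, 1) ∧ x - (1, 0) ≠ x + (0, 1) ∧ x - (1, 0) ≠ x - (0, 1) := by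
    simp only [ne_eq, Prod.ext_iff, Prod.fst_add, Prod.snd_add, Prod.fst_sub, Prod.snd_sub]
    omega
  obtain ⟨x1, x2, x3, x4, x5, x6⟩ := hxx
  rcases hz with h | h | h | h
  · refine ⟨1, 3 / 2, ?_⟩
    subst h
    simp only [labelWeight, x1.symm, x3.symm, x4.symm, if_true, if_false]
    refine ⟨?_, ?_, ?_⟩
    · cases l <;> simp <;> nlinarith
    · simp
    · simp; ring
  · refine ⟨1, 3 / 2, ?_⟩
    subst h
    simp only [labelWeight, x1, x5.symm, x6.symm, if_true, if_false]
    refine ⟨?_, ?_, ?_⟩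
    · cases l <;> simp <;> nlinarith
    · simp
    · simp; ring
  · refine ⟨3 / 2, 1, ?_⟩
    subst h
    simp only [labelWeight, x3, x5, x2.symm, if_true, if_false]
    refine ⟨?_, ?_, ?_⟩
    · cases l <;> simp <;> nlinarith
    · simp; ring
    · simp
  · refine ⟨3 / 2, 1, ?_⟩
    subst h
    simp only [labelWeight, x2, x4, x6, if_true, if_false]
    refine ⟨?_, ?_, ?_⟩
    · cases l <;> simp <;> nlinarith
    · simp; ring
    · simp

lemma lintegral_avoid_le [IsProbabilityMeasure μ] (hq : q ∈ Set.Ioc (0 : ℝ) 1)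
    (hμ : IsLaw q n hn ρ μ) (x z : Z2)
    (hz : z = x + (1, 0) ∨ z = x - (1, 0) ∨ z = x + (0, 1) ∨ z = x - (0, 1))
    (u t : ℕ) (hu : u ≤ t) :
    ∫⁻ y, ENNReal.ofReal (avoid q n hn ρ x z u t y) ∂μ ≤ 1 := by
  induction t, hu using Nat.le_induction with
  | base =>
    calc _ ≤ ∫⁻ _, 1 ∂μ := by
          refine lintegral_mono fun y => ENNReal.ofReal_le_one.2 ?_
          have := (labelWeight_bounds x z ((seq n hn ρ y u).2 x)).2
          unfold avoid count
          split_ifs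
          · simpa using this
          · norm_num
      _ = 1 := by simp
  | succ t hut ih => exact (lintegral_avoid_succ hq hμ x z hz u t hut).trans ih

lemma tendsto_count (x : Z2) (u : ℕ) (y : Path) (h : ∃ᶠ t in atTop, site n hn ρ y t = x) :
    Tendsto (fun t => count n hn ρ x u t y) atTop atTop := by
  apply tendsto_atTop_atTop_of_monotone
  · intro t t' ht
    exact Finset.card_le_card (Finset.filter_subset_filter _ (Finset.Ico_subset_Ico_right ht))
  · intro m
    induction m with
    | zero => exact ⟨0, Nat.zero_le _⟩
    | succ m ih =>
      obtain ⟨t, ht⟩ := ih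
      obtain ⟨s, hs, hx⟩ := frequently_atTop.1 h (max t u)
      refine ⟨s + 1, ?_⟩
      rw [count_succ _ _ _ (by omega), if_pos hx]
      have : count n hn ρ x u t y ≤ count n hn ρ x u s y :=
        Finset.card_le_card (Finset.filter_subset_filter _
          (Finset.Ico_subset_Ico_right (by omega)))
      omega

/-- If some walker leaves `x` infinitely often, then it moves to each neighbour of `x` infinitely
often: otherwise the supermartingale `avoid` would tend to infinity. -/
lemma ae_frequently_hit [IsProbabilityMeasure μ] (hq : q ∈ Set.Ioc (0 : ℝ) 1)
    (hμ : IsLaw q n hn ρ μ) (x z : Z2)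
    (hz : z = x + (1, 0) ∨ z = x - (1, 0) ∨ z = x + (0, 1) ∨ z = x - (0, 1)) :
    ∀ᵐ y ∂μ, (∃ᶠ t in atTop, site n hn ρ y t = x) →
      ∃ᶠ t in atTop, Hit n hn ρ x z t y := by
  have hfin : ∀ u : ℕ, ∀ᵐ y ∂μ,
      liminf (fun t => ENNReal.ofReal (avoid q n hn ρ x z u t y)) atTop < ⊤ := by
    intro u
    have hm : ∀ t, Measurable fun y => ENNReal.ofReal (avoid q n hn ρ x z u t y) := fun t =>
      (adapted_avoid x z u t).measurable.ennreal_ofReal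
    refine ae_lt_top (Measurable.liminf hm) ?_
    refine ((lintegral_liminf_le hm).trans (?_ : _ ≤ (1 : ℝ≥0∞))).trans_lt ENNReal.one_lt_top |>.ne
    refine liminf_le_of_frequently_le' (Eventually.frequently ?_)
    filter_upwards [eventually_ge_atTop u] with t ht
    exact lintegral_avoid_le hq hμ x z hz u t ht
  filter_upwards [ae_all_iff.2 hfin] with y hy hx
  by_contra hnot
  obtain ⟨u, hu⟩ := eventually_atTop.1 (not_frequently.1 hnot)
  have hq0 := hq.1
  have hq1 := hq.2
  have hl : 0 < 1 - q / 4 := by linarith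
  have hno : ∀ t, NoHit n hn ρ x z u t y := fun t s hs _ => hu s hs
  have hlow : ∀ t, 3 / 4 * (1 / (1 - q / 4)) ^ count n hn ρ x u t y ≤
      avoid q n hn ρ x z u t y := by
    intro t
    unfold avoid
    rw [if_pos (hno t)]
    exact mul_le_mul_of_nonneg_right (labelWeight_bounds _ _ _).1 (by positivity)
  have hgt : 1 < 1 / (1 - q / 4) := by
    rw [lt_div_iff₀ hl]; linarith
  have htop : Tendsto (fun t => avoid q n hn ρ x z u t y) atTop atTop :=
    tendsto_atTop_mono hlow (((tendsto_pow_atTop_atTop_of_one_lt hgt).comp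
      (tendsto_count x u y hx)).const_mul_atTop (by norm_num))
  have hT : Tendsto (fun t => ENNReal.ofReal (avoid q n hn ρ x z u t y)) atTop (nhds ⊤) :=
    ENNReal.tendsto_ofReal_atTop.comp htop
  have := hy u
  rw [hT.liminf_eq] at this
  exact lt_irrefl _ this

/-- A walker waits at its place until its next turn. -/
lemma exists_site_eq (y : Path) (t : ℕ) (i : Fin n) :
    ∃ s, t ≤ s ∧ site n hn ρ y s = (seq n hn ρ y t).1 i := by
  have h : ∀ m t, active n hn (t + m) = i →
      ∃ s, t ≤ s ∧ site n hn ρ y s = (seq n hn ρ y t).1 i := by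
    intro m
    induction m with
    | zero =>
      intro t ht
      refine ⟨t, le_rfl, ?_⟩
      unfold site
      rw [show active n hn t = i from ht]
    | succ m ih =>
      intro t ht
      by_cases hi : active n hn t = i
      · exact ⟨t, le_rfl, by unfold site; rw [hi]⟩
      · obtain ⟨s, hs, hs'⟩ := ih (t + 1) (by rw [← ht]; congr 1; omega)
        refine ⟨s, by omega, ?_⟩
        rw [hs', seq_succ]
        exact Function.update_of_ne (fun h => hi h.symm) _ _
  have hle : t ≤ n * t := Nat.le_mul_of_pos_left _ hn
  refine h (n * t + i - t) t ?_
  apply Fin.ext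
  simp only [active]
  rw [show t + (n * t + i - t) = n * t + i by omega, Nat.mul_add_mod, Nat.mod_eq_of_lt i.2]

lemma frequently_site (y : Path) (p : Z2)
    (h : ∃ᶠ t in atTop, ∃ i, (seq n hn ρ y t).1 i = p) :
    ∃ᶠ t in atTop, site n hn ρ y t = p := by
  rw [frequently_atTop] at h ⊢
  intro a
  obtain ⟨t, ht, i, hi⟩ := h a
  obtain ⟨s, hs, hs'⟩ := exists_site_eq (hn := hn) (ρ := ρ) y t i
  exact ⟨s, ht.trans hs, hs'.trans hi⟩

lemma frequently_site_of_hit (y : Path) (x z : Z2)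
    (h : ∃ᶠ t in atTop, Hit n hn ρ x z t y) :
    ∃ᶠ t in atTop, site n hn ρ y t = z := by
  apply frequently_site
  rw [frequently_atTop] at h ⊢
  intro a
  obtain ⟨t, ht, -, hz⟩ := h a
  refine ⟨t + 1, by omega, active n hn t, ?_⟩
  rw [seq_succ]
  simp [apply', hz]

/-- Infinitely many returns near the origin mean infinitely many visits to one of finitely many
sites. -/
lemma exists_frequently_site (y : Path) (h : ∀ u, y ∉ Esc n hn ρ u) :
    ∃ p, ∃ᶠ t in atTop, site n hn ρ y t = p := by
  by_contra hnot
  push Not at hnot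
  have hfin : ∀ p : Z2, ∀ᶠ t in atTop, ∀ i, (seq n hn ρ y t).1 i ≠ p := by
    intro p
    by_contra hp
    refine frequently_site (hn := hn) (ρ := ρ) y p ?_ (hnot p)
    simpa [Filter.Frequently] using hp
  have hall : ∀ᶠ t in atTop, ∀ p ∈ Finset.Icc (-3 : ℤ) 3 ×ˢ Finset.Icc (-3 : ℤ) 3,
      ∀ i, (seq n hn ρ y t).1 i ≠ p :=
    (Finset.eventually_all _).2 fun p _ => hfin p
  obtain ⟨u, hu⟩ := eventually_atTop.1 hall
  apply h u
  intro t s hs _ i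
  by_contra hlt
  apply hu s hs _ ?_ i rfl
  unfold nsq at hlt
  push Not at hlt
  have hZ : ((seq n hn ρ y s).1 i).1 ^ 2 + ((seq n hn ρ y s).1 i).2 ^ 2 < 9 := by
    exact_mod_cast hlt
  rw [Finset.mem_product, Finset.mem_Icc, Finset.mem_Icc]
  refine ⟨⟨?_, ?_⟩, ?_, ?_⟩ <;> nlinarith [sq_nonneg ((seq n hn ρ y s).1 i).1,
    sq_nonneg ((seq n hn ρ y s).1 i).2]

/-- A set of sites closed under moves to neighbours is empty or everything. -/
lemma forall_of_neighbours {S : Z2 → Prop}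
    (hS : ∀ x z, (z = x + (1, 0) ∨ z = x - (1, 0) ∨ z = x + (0, 1) ∨ z = x - (0, 1)) →
      S x → S z) (p : Z2) (hp : S p) (v : Z2) : S v := by
  have h1 : ∀ k : ℤ, S (p.1 + k, p.2) := by
    intro k
    induction k using Int.induction_on with
    | zero => simpa using hp
    | succ k ih => exact hS _ _ (Or.inl (by ext <;> simp; ring)) ih
    | pred k ih => exact hS _ _ (Or.inr (Or.inl (by ext <;> simp; ring))) ih
  have h2 : ∀ k : ℤ, S (v.1, p.2 + k) := by
    intro k
    induction k using Int.induction_on with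
    | zero => simpa using h1 (v.1 - p.1)
    | succ k ih => exact hS _ _ (Or.inr (Or.inr (Or.inl (by ext <;> simp; ring)))) ih
    | pred k ih => exact hS _ _ (Or.inr (Or.inr (Or.inr (by ext <;> simp; ring)))) ih
  simpa using h2 (v.2 - p.2)

lemma ae_recurrent [IsProbabilityMeasure μ] (hq : q ∈ Set.Ioc (0 : ℝ) 1)
    (hμ : IsLaw q n hn ρ μ) (hesc : ∀ u, μ (Esc n hn ρ u) = 0) :
    ∀ᵐ y ∂μ, Recurrent n hn ρ y := by
  have h1 : ∀ᵐ y ∂μ, ∀ u, y ∉ Esc n hn ρ u :=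
    ae_all_iff.2 fun u => measure_eq_zero_iff_ae_notMem.1 (hesc u)
  have h2 : ∀ᵐ y ∂μ, ∀ x z : Z2,
      (z = x + (1, 0) ∨ z = x - (1, 0) ∨ z = x + (0, 1) ∨ z = x - (0, 1)) →
      (∃ᶠ t in atTop, site n hn ρ y t = x) → ∃ᶠ t in atTop, Hit n hn ρ x z t y := by
    refine ae_all_iff.2 fun x => ae_all_iff.2 fun z => ?_
    by_cases hz : z = x + (1, 0) ∨ z = x - (1, 0) ∨ z = x + (0, 1) ∨ z = x - (0, 1)
    · filter_upwards [ae_frequently_hit hq hμ x z hz] with y hy _ using hy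
    · exact Eventually.of_forall fun y h => absurd h hz
  filter_upwards [h1, h2] with y hy1 hy2
  obtain ⟨p, hp⟩ := exists_frequently_site y hy1
  intro v
  have hv : ∃ᶠ t in atTop, site n hn ρ y t = v :=
    forall_of_neighbours (S := fun x => ∃ᶠ t in atTop, site n hn ρ y t = x)
      (fun x z hz hx => frequently_site_of_hit y x z (hy2 x z hz hx)) p hp v
  refine Nat.frequently_atTop_iff_infinite.1 (hv.mono fun t ht => ?_)
  exact ⟨active n hn t, ht⟩

end

end HV

/-- **Theorem (recurrence with many walkers).**
Let `q ∈ (0,1]` and `n ≥ ⌊|4q−2|/q⌋ + 1`.  Then, for every choice of the initial labels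
`ρ`, the `n`-walker `H`–`V` walk with parameter `q` and initial configuration `ρ` is
recurrent with probability `1`, i.e. `p_rec(ρ) = 1`. -/
theorem hv_walk_many_walkers_recurrent
    (q : ℝ) (hq : q ∈ Set.Ioc (0 : ℝ) 1) (n : ℕ) (hn : 0 < n)
    (hn' : ⌊|4 * q - 2| / q⌋ + 1 ≤ (n : ℤ))
    (ρ : HV.Config) (μ : MeasureTheory.Measure HV.Path)
    [MeasureTheory.IsProbabilityMeasure μ] (hμ : HV.IsLaw q n hn ρ μ) :
    μ {y | HV.Recurrent n hn ρ y} = 1 := by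
  have hlt : |4 * q - 2| / q < n := by
    have h1 := Int.lt_floor_add_one (|4 * q - 2| / q)
    have h2 : ((⌊|4 * q - 2| / q⌋ + 1 : ℤ) : ℝ) ≤ n := by exact_mod_cast hn'
    push_cast at h2
    linarith
  have h := HV.ae_recurrent hq hμ fun u => HV.esc_null hq hlt hμ u
  rw [measure_congr (eventuallyEq_univ.2 h), measure_univ]
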